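/- arXiv:1812.04578 — 2 statements merged into one kernel-verified Lean document; each statement's English description precedes it below -/
import Mathlib

section
/- Let α = (α_1,…,α_r) be a composition of n with gcd(α_1,…,α_r)=1, let X be the set of α-necklaces, and write C(α;q) = Σ_i a_i q^i. Then (1/2)(C(α;1) + C(α;−1)) = a_0 + a_2 + a_4 + ⋯ equals the total number of bracelets, and (1/2)(C(α;1) − C(α;−1)) = a_1 + a_3 + a_5 + ⋯ equals the number of asymmetric bracelets. Equivalently, (X, C(α;q), τ_0) exhibits Stembridge's q=−1 phenomenon: C(α;−1) is the number of necklaces fixed by the reflection τ_0. -/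
open Polynomial in
/-- The q-analogue `[n]_q = 1 + q + ⋯ + q^{n-1}` as a polynomial in `ℤ[q]`. -/
noncomputable def qInt (n : ℕ) : Polynomial ℤ := ∑ i ∈ Finset.range n, X ^ i

/-- The q-factorial `[n]!_q = [n]_q [n-1]_q ⋯ [1]_q`. -/
noncomputable def qFactorial : ℕ → Polynomial ℤ
  | 0 => 1
  | n + 1 => qInt (n + 1) * qFactorial n

/-- Words of content `α`: functions from the `n` cyclically-arranged positions `ℤ/nℤ` to the
letters `Fin r`, with exactly `α i` occurrences of each letter `i`. -/
def Words (n r : ℕ) [NeZero n] (α : Fin r → ℕ) : Type :=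
  {w : ZMod n → Fin r // ∀ i : Fin r, (Finset.univ.filter fun x => w x = i).card = α i}

/-- Two words are rotation-equivalent if one is obtained from the other by cyclically
rotating positions; the equivalence classes are the `α`-necklaces. -/
def neckSetoid (n r : ℕ) [NeZero n] (α : Fin r → ℕ) : Setoid (Words n r α) where
  r w w' := ∃ t : ZMod n, ∀ x : ZMod n, w'.1 x = w.1 (x + t)
  iseqv := by
    constructor
    · exact fun w => ⟨0, fun x => by rw [add_zero]⟩
    · rintro w w' ⟨t, ht⟩
      exact ⟨-t, fun x => by rw [ht (x + -t), neg_add_cancel_right]⟩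
    · rintro w w' w'' ⟨t, ht⟩ ⟨s, hs⟩
      exact ⟨s + t, fun x => by rw [hs x, ht (x + s), add_assoc]⟩

/-- Two words are bracelet-equivalent if one is obtained from the other by a rotation or by
a rotation composed with the reflection `τ₀ : x ↦ −x`; the classes are the bracelets,
i.e. the orbits of the `τ₀`-action on necklaces. -/
def braceSetoid (n r : ℕ) [NeZero n] (α : Fin r → ℕ) : Setoid (Words n r α) where
  r w w' := ∃ t : ZMod n,
    (∀ x : ZMod n, w'.1 x = w.1 (x + t)) ∨ (∀ x : ZMod n, w'.1 x = w.1 (t - x))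
  iseqv := by
    constructor
    · exact fun w => ⟨0, Or.inl fun x => by rw [add_zero]⟩
    · rintro w w' ⟨t, ht | ht⟩
      · exact ⟨-t, Or.inl fun x => by rw [ht (x + -t), neg_add_cancel_right]⟩
      · exact ⟨t, Or.inr fun x => by rw [ht (t - x), sub_sub_cancel]⟩
    · rintro w w' w'' ⟨t, ht | ht⟩ ⟨s, hs | hs⟩
      · exact ⟨s + t, Or.inl fun x => by rw [hs x, ht (x + s), add_assoc]⟩
      · exact ⟨t + s, Or.inr fun x => by rw [hs x, ht (s - x), sub_add_eq_add_sub, add_comm t s]⟩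
      · exact ⟨t - s, Or.inr fun x => by rw [hs x, ht (x + s)]; ring_nf⟩
      · exact ⟨t - s, Or.inl fun x => by rw [hs x, ht (s - x)]; ring_nf⟩

/-- A word is reflection-symmetric if some rotation of its reflection returns the word
itself: the necklace of `w` is fixed by the reflection `τ₀` iff `ReflSymm w`. -/
def ReflSymm {n r : ℕ} [NeZero n] {α : Fin r → ℕ} (w : Words n r α) : Prop :=
  ∃ t : ZMod n, ∀ x : ZMod n, w.1 (t - x) = w.1 x


/-- The words with `α i` occurrences of each letter `i` are counted by a multinomial coefficient. -/
theorem card_content_mul_prod_factorial {ι κ : Type*} [Fintype ι] [Fintype κ] [DecidableEq κ]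
    (α : κ → ℕ) (hα : ∑ i, α i = Fintype.card ι) :
    Nat.card {w : ι → κ // ∀ i, (Finset.univ.filter fun x => w x = i).card = α i} *
      ∏ i, (α i).factorial = (Fintype.card ι).factorial := by
  classical
  have key : ∀ w : {w : ι → κ // ∀ i, (Finset.univ.filter fun x => w x = i).card = α i},
      ∃ e : ι ≃ Σ i, Fin (α i), ∀ x, (e x).1 = w.1 x := fun w =>
    ⟨(Equiv.sigmaFiberEquiv w.1).symm.trans (Equiv.sigmaCongrRight fun i =>
      Fintype.equivFinOfCardEq (by rw [Fintype.card_subtype]; exact w.2 i)), fun x => rfl⟩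
  choose e he using key
  let Φ : (Σ w : {w : ι → κ // ∀ i, (Finset.univ.filter fun x => w x = i).card = α i},
      {g : Equiv.Perm ι // w.1 ∘ g = w.1}) → (ι ≃ Σ i, Fin (α i)) := fun p => p.2.1.trans (e p.1)
  have hΦw : ∀ p x, (Φ p x).1 = p.1.1 x := fun p x => by
    simp only [Φ, Equiv.trans_apply, he]
    exact congrFun p.2.2 x
  have hΦ : Function.Bijective Φ := by
    constructor
    · rintro ⟨w, g⟩ ⟨w', g'⟩ h
      obtain rfl : w = w' := Subtype.ext <| funext fun x => by
        rw [← hΦw ⟨w, g⟩ x, ← hΦw ⟨w', g'⟩ x, h]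
      congr 1
      refine Subtype.ext <| Equiv.ext fun x => (e w).injective ?_
      exact DFunLike.congr_fun h x
    · intro f
      let w : {w : ι → κ // ∀ i, (Finset.univ.filter fun x => w x = i).card = α i} :=
        ⟨fun x => (f x).1, fun i => by
          rw [← Fintype.card_subtype, ← Fintype.card_fin (α i)]
          exact Fintype.card_congr ((f.subtypeEquiv fun x => Iff.rfl).trans
            (Equiv.sigmaSubtype i))⟩
      refine ⟨⟨w, f.trans (e w).symm, funext fun x => ?_⟩, Equiv.ext fun x => ?_⟩
      · simp only [Function.comp_apply, Equiv.trans_apply]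
        rw [← he w, Equiv.apply_symm_apply]
      · simp [Φ]
  have hι : Fintype.card (Σ i, Fin (α i)) = Fintype.card ι := by simp [hα]
  rw [← Fintype.card_equiv (Fintype.equivOfCardEq hι.symm), ← Nat.card_eq_fintype_card,
    ← Nat.card_congr (Equiv.ofBijective Φ hΦ), Nat.card_sigma,
    Finset.sum_congr rfl fun w _ => by
      rw [Nat.card_eq_fintype_card, DomMulAct.stabilizer_card,
        Finset.prod_congr rfl fun i _ => by rw [Fintype.card_subtype, w.2 i]],
    Finset.sum_const, Finset.card_univ, Nat.card_eq_fintype_card, smul_eq_mul]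

/-- A finite set which is stable under an involution without fixed points in it has even size. -/
theorem even_card_of_involution {ι : Type*} {s : ι → ι} (hs : Function.Involutive s)
    (S : Finset ι) (hS : ∀ x ∈ S, s x ∈ S) (hfix : ∀ x ∈ S, s x ≠ x) : Even S.card := by
  have h : ∑ x ∈ S, (1 : ZMod 2) = 0 :=
    Finset.sum_involution (fun x _ => s x) (fun _ _ => by decide) (fun x hx _ => hfix x hx)
      hS (fun x _ => hs x)
  rw [Finset.sum_const, nsmul_one, ZMod.natCast_eq_zero_iff] at h
  exact even_iff_two_dvd.2 h

/-- Every letter occurring an odd number of times in an invariant word occurs at a fixed point. -/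
theorem exists_fixed_of_odd {ι κ : Type*} [Fintype ι] [DecidableEq κ] {s : ι → ι}
    (hs : Function.Involutive s) {w : ι → κ} (hw : ∀ x, w (s x) = w x) {i : κ}
    (hi : Odd (Finset.univ.filter fun x => w x = i).card) : ∃ x, s x = x ∧ w x = i := by
  by_contra! h
  refine Nat.not_even_iff_odd.2 hi (even_card_of_involution hs _ ?_ ?_)
  · simp [hw]
  · intro x hx hsx
    exact h x hsx (by simpa using hx)

theorem card_fixed_add_two_mul {ι : Type*} [Fintype ι] [LinearOrder ι] {s : ι → ι}
    (hs : Function.Involutive s) :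
    (Finset.univ.filter fun x => s x = x).card + 2 * (Finset.univ.filter fun x => x < s x).card =
      Fintype.card ι := by
  have h1 : (Finset.univ.filter fun x => s x < x).card =
      (Finset.univ.filter fun x => x < s x).card :=
    Finset.card_bij' (fun x _ => s x) (fun x _ => s x) (by simp [hs _]) (by simp [hs _])
      (by simp [hs _]) (by simp [hs _])
  have h2 : (Finset.univ.filter fun x => ¬ s x = x).card =
      (Finset.univ.filter fun x => s x < x).card + (Finset.univ.filter fun x => x < s x).card := by
    rw [← Finset.card_union_of_disjoint]
    · congr 1
      ext x
      simp [lt_or_lt_iff_ne]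
    · rw [Finset.disjoint_filter]
      exact fun x _ h => h.asymm
  have h3 := Finset.card_filter_add_card_filter_not (s := (Finset.univ : Finset ι))
    (fun x => s x = x)
  rw [Finset.card_univ] at h3
  omega

theorem sum_eq_card_odd_add {κ : Type*} [Fintype κ] (α : κ → ℕ) :
    ∑ i, α i = (Finset.univ.filter fun i => Odd (α i)).card + 2 * ∑ i, α i / 2 := by
  rw [Finset.card_filter, Finset.mul_sum, ← Finset.sum_add_distrib]
  refine Finset.sum_congr rfl fun i _ => ?_
  split_ifs with h
  · rw [Nat.odd_iff] at h
    omega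
  · rw [Nat.not_odd_iff] at h
    omega

theorem odd_subset_image_fixed {ι κ : Type*} [Fintype ι] [Fintype κ] [DecidableEq ι]
    [DecidableEq κ] {s : ι → ι} (hs : Function.Involutive s) {α : κ → ℕ} {w : ι → κ}
    (hwα : ∀ i, (Finset.univ.filter fun x => w x = i).card = α i) (hw : ∀ x, w (s x) = w x) :
    (Finset.univ.filter fun i => Odd (α i)) ⊆
      (Finset.univ.filter fun x => s x = x).image w := by
  intro i hi
  obtain ⟨x, hx, rfl⟩ := exists_fixed_of_odd hs hw (i := i) (by simpa [hwα] using hi)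
  exact Finset.mem_image_of_mem w (by simpa using hx)

/-- If the letters of odd multiplicity are as many as the fixed points of an involution, an
invariant word amounts to a bijection between the two and a word on half of the other points. -/
theorem card_invariant_mul_prod_factorial {ι κ : Type*} [Fintype ι] [LinearOrder ι] [Fintype κ]
    [DecidableEq κ] {s : ι → ι} (hs : Function.Involutive s) (α : κ → ℕ)
    (hα : ∑ i, α i = Fintype.card ι)
    (hF : (Finset.univ.filter fun x => s x = x).card =
      (Finset.univ.filter fun i => Odd (α i)).card) :
    Nat.card {w : ι → κ // (∀ i, (Finset.univ.filter fun x => w x = i).card = α i) ∧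
        ∀ x, w (s x) = w x} * ∏ i, (α i / 2).factorial =
      (Finset.univ.filter fun x => s x = x).card.factorial * (∑ i, α i / 2).factorial := by
  classical
  have hJ : ∑ i, α i / 2 = Fintype.card {x // x < s x} := by
    have h1 := card_fixed_add_two_mul hs
    have h2 := sum_eq_card_odd_add α
    rw [Fintype.card_subtype]
    omega
  have hF' : Fintype.card {x // s x = x} = Fintype.card {i // Odd (α i)} := by
    rw [Fintype.card_subtype, Fintype.card_subtype, hF]
  let g (e : {x // s x = x} ≃ {i // Odd (α i)}) (u : {x // x < s x} → κ) : ι → κ := fun x =>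
    if h : s x = x then (e ⟨x, h⟩).1 else if h' : x < s x then u ⟨x, h'⟩ else
      u ⟨s x, by rw [hs]; exact lt_of_le_of_ne (not_lt.1 h') h⟩
  have g_fix : ∀ e u x (h : s x = x), g e u x = (e ⟨x, h⟩).1 := fun e u x h => dif_pos h
  have g_lt : ∀ e u x (h : x < s x), g e u x = u ⟨x, h⟩ := fun e u x h => by
    simp only [g]
    rw [dif_neg h.ne', dif_pos h]
  have g_inv : ∀ e u x, g e u (s x) = g e u x := by
    intro e u x
    rcases lt_trichotomy x (s x) with h | h | h
    · rw [g_lt e u x h]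
      simp only [g, hs x]
      rw [dif_neg h.ne, dif_neg h.asymm]
    · rw [← h]
    · rw [g_lt e u (s x) (by rwa [hs])]
      simp only [g]
      rw [dif_neg h.ne, dif_neg h.asymm]
  have content : ∀ w : ι → κ, (∀ x, w (s x) = w x) → ∀ i,
      (Finset.univ.filter fun x => w x = i).card =
        (Finset.univ.filter fun x : {x // s x = x} => w x.1 = i).card +
        2 * (Finset.univ.filter fun x : {x // x < s x} => w x.1 = i).card := by
    intro w hw i
    have hs' : Function.Involutive fun x : {x // w x = i} => (⟨s x.1, by rw [hw, x.2]⟩ :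
        {x // w x = i}) := fun x => Subtype.ext (hs x.1)
    have h := card_fixed_add_two_mul hs'
    rw [Fintype.card_subtype] at h
    rw [← h]
    congr 1
    · rw [← Fintype.card_subtype, ← Fintype.card_subtype]
      exact Fintype.card_congr ⟨fun x => ⟨⟨x.1.1, congrArg Subtype.val x.2⟩, x.1.2⟩,
        fun x => ⟨⟨x.1.1, x.2⟩, Subtype.ext x.1.2⟩, fun _ => rfl, fun _ => rfl⟩
    · congr 1
      rw [← Fintype.card_subtype, ← Fintype.card_subtype]
      exact Fintype.card_congr ⟨fun x => ⟨⟨x.1.1, x.2⟩, x.1.2⟩,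
        fun x => ⟨⟨x.1.1, x.2⟩, x.1.2⟩, fun _ => rfl, fun _ => rfl⟩
  have fixCount : ∀ (e : {x // s x = x} ≃ {i // Odd (α i)}) i,
      (Finset.univ.filter fun x => (e x).1 = i).card = α i % 2 := by
    intro e i
    by_cases hi : Odd (α i)
    · rw [Nat.odd_iff.1 hi, Finset.card_eq_one]
      refine ⟨e.symm ⟨i, hi⟩, Finset.ext fun x => ?_⟩
      simp [Equiv.eq_symm_apply, Subtype.ext_iff]
    · rw [Nat.not_odd_iff.1 hi, Finset.card_eq_zero, Finset.filter_eq_empty_iff]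
      rintro x - rfl
      exact hi (e x).2
  let Φ : ({x // s x = x} ≃ {i // Odd (α i)}) × {u : {x // x < s x} → κ //
      ∀ i, (Finset.univ.filter fun x => u x = i).card = α i / 2} →
      {w : ι → κ // (∀ i, (Finset.univ.filter fun x => w x = i).card = α i) ∧
        ∀ x, w (s x) = w x} := fun p => ⟨g p.1 p.2.1, fun i => by
      rw [content _ (g_inv _ _),
        Finset.filter_congr fun (x : {x // s x = x}) _ => by rw [g_fix _ _ _ x.2],
        fixCount,
        Finset.filter_congr fun (x : {x // x < s x}) _ => by rw [g_lt _ _ _ x.2],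
        p.2.2, Nat.mod_add_div], g_inv _ _⟩
  have hΦ : Function.Bijective Φ := by
    constructor
    · rintro ⟨e, u⟩ ⟨e', u'⟩ h
      have h' : g e u.1 = g e' u'.1 := congrArg Subtype.val h
      refine Prod.ext (Equiv.ext fun x => Subtype.ext ?_) (Subtype.ext (funext fun x => ?_))
      · rw [← g_fix e u.1 x.1 x.2, h', g_fix e' u'.1 x.1 x.2]
      · rw [← g_lt e u.1 x.1 x.2, h', g_lt e' u'.1 x.1 x.2]
    · rintro ⟨w, hwα, hw⟩
      have hsub := odd_subset_image_fixed hs hwα hw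
      have heq := Finset.eq_of_subset_of_card_le hsub (Finset.card_image_le.trans hF.le)
      have hmem : ∀ x : {x // s x = x}, Odd (α (w x.1)) := fun x => by
        have : w x.1 ∈ Finset.univ.filter fun i => Odd (α i) := by
          rw [heq]
          exact Finset.mem_image_of_mem w (by simpa using x.2)
        simpa using this
      have hbij : Function.Bijective fun x : {x // s x = x} =>
          (⟨w x.1, hmem x⟩ : {i // Odd (α i)}) := by
        rw [Fintype.bijective_iff_surjective_and_card]
        refine ⟨?_, hF'⟩
        rintro ⟨i, hi⟩
        obtain ⟨x, hx, hxi⟩ := exists_fixed_of_odd hs hw (i := i) (by rwa [hwα])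
        exact ⟨⟨x, hx⟩, Subtype.ext hxi⟩
      refine ⟨⟨Equiv.ofBijective _ hbij, fun x => w x.1, fun i => ?_⟩,
        Subtype.ext (funext fun x => ?_)⟩
      · have h1 := content w hw i
        have h2 := fixCount (Equiv.ofBijective _ hbij) i
        simp only [Equiv.ofBijective_apply] at h2
        rw [h2, hwα] at h1
        change (Finset.univ.filter fun x : {x // x < s x} => w x.1 = i).card = _
        omega
      · rcases lt_trichotomy x (s x) with h | h | h
        · exact g_lt _ _ _ h
        · exact g_fix _ _ _ h.symm
        · exact (g_inv _ _ x).symm.trans ((g_lt _ _ _ (by rwa [hs])).trans (hw x))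
  rw [← Nat.card_congr (Equiv.ofBijective Φ hΦ), Nat.card_prod, mul_assoc,
    card_content_mul_prod_factorial _ hJ, Nat.card_eq_fintype_card,
    Fintype.card_equiv (Fintype.equivOfCardEq hF'), Fintype.card_subtype, hJ]

theorem eval_one_qInt (n : ℕ) : (qInt n).eval 1 = n := by
  simp [qInt, Polynomial.eval_finsetSum]

theorem eval_one_qFactorial (n : ℕ) : (qFactorial n).eval 1 = n.factorial := by
  induction n with
  | zero => simp [qFactorial]
  | succ n ih => simp [qFactorial, Nat.factorial_succ, eval_one_qInt, ih]

theorem qInt_two_mul (k : ℕ) :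
    qInt (2 * k) = (1 + Polynomial.X) * ∑ i ∈ Finset.range k, Polynomial.X ^ (2 * i) := by
  induction k with
  | zero => simp [qInt]
  | succ k ih =>
    rw [show 2 * (k + 1) = 2 * k + 1 + 1 by ring, Finset.sum_range_succ, mul_add, ← ih, qInt, qInt,
      Finset.sum_range_succ, Finset.sum_range_succ]
    ring

theorem eval_neg_one_qInt_odd (k : ℕ) : (qInt (2 * k + 1)).eval (-1) = 1 := by
  rw [qInt, Finset.sum_range_succ, ← qInt, qInt_two_mul]
  simp

/-- `[m]!_q` vanishes at `q = -1` to order `⌊m/2⌋`, with leading coefficient `⌊m/2⌋!`. -/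
theorem exists_qFactorial_eq (m : ℕ) : ∃ R : Polynomial ℤ,
    qFactorial m = (1 + Polynomial.X) ^ (m / 2) * R ∧ R.eval (-1) = (m / 2).factorial := by
  induction m with
  | zero => exact ⟨1, by simp [qFactorial]⟩
  | succ m ih =>
    obtain ⟨R, hR, hR'⟩ := ih
    rcases Nat.even_or_odd' m with ⟨k, rfl | rfl⟩
    · refine ⟨qInt (2 * k + 1) * R, ?_, ?_⟩
      · rw [qFactorial, hR, show (2 * k + 1) / 2 = 2 * k / 2 by omega]
        ring
      · rw [Polynomial.eval_mul, eval_neg_one_qInt_odd, hR', one_mul,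
          show (2 * k + 1) / 2 = 2 * k / 2 by omega]
    · refine ⟨(∑ i ∈ Finset.range (k + 1), Polynomial.X ^ (2 * i)) * R, ?_, ?_⟩
      · rw [qFactorial, hR, show 2 * k + 1 + 1 = 2 * (k + 1) by ring, qInt_two_mul,
          show (2 * k + 1) / 2 = k by omega, show 2 * (k + 1) / 2 = k + 1 by omega]
        ring
      · rw [Polynomial.eval_mul, hR', show (2 * k + 1 + 1) / 2 = k + 1 by omega,
          show (2 * k + 1) / 2 = k by omega, Nat.factorial_succ]
        simp [Polynomial.eval_finsetSum, pow_mul]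

theorem exists_odd_of_gcd_eq_one {r : ℕ} {α : Fin r → ℕ} (hgcd : Finset.univ.gcd α = 1) :
    0 < (Finset.univ.filter fun i => Odd (α i)).card := by
  rw [Finset.card_pos]
  by_contra h
  rw [Finset.not_nonempty_iff_eq_empty, Finset.filter_eq_empty_iff] at h
  have h2 : 2 ∣ Finset.univ.gcd α := Finset.dvd_gcd fun i hi =>
    even_iff_two_dvd.1 (Nat.not_odd_iff_even.1 (h hi))
  rw [hgcd] at h2
  omega

theorem eval_one_mul_prod_factorial {n r : ℕ} {α : Fin r → ℕ} {C : Polynomial ℤ}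
    (hC : qInt n * C * ∏ i, qFactorial (α i) = qFactorial n) :
    n * C.eval 1 * (∏ i, (α i).factorial : ℕ) = n.factorial := by
  have h := congrArg (Polynomial.eval 1) hC
  simpa [Polynomial.eval_mul, Polynomial.eval_prod, eval_one_qInt, eval_one_qFactorial] using h

theorem eval_neg_one_mul_prod_factorial {n r : ℕ} [NeZero n] {α : Fin r → ℕ}
    (hsum : ∑ i, α i = n) (hodd : 0 < (Finset.univ.filter fun i => Odd (α i)).card)
    {C : Polynomial ℤ} (hC : qInt n * C * ∏ i, qFactorial (α i) = qFactorial n) :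
    C.eval (-1) * (∏ i, (α i / 2).factorial : ℕ) =
      if (Finset.univ.filter fun i => Odd (α i)).card ≤ 2 then
        ((∑ i, α i / 2).factorial : ℤ) else 0 := by
  have hsplit := sum_eq_card_odd_add α
  rw [hsum] at hsplit
  obtain ⟨m, rfl⟩ := Nat.exists_eq_succ_of_ne_zero (NeZero.ne n)
  have hq : qInt (m + 1) ≠ 0 := fun h => by
    have := eval_one_qInt (m + 1)
    rw [h, Polynomial.eval_zero] at this
    push_cast at this
    omega
  rw [Nat.succ_eq_add_one, qFactorial, mul_assoc] at hC
  have hC' := mul_left_cancel₀ hq hC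
  choose R hR hR' using exists_qFactorial_eq
  have hX : (1 + Polynomial.X : Polynomial ℤ) ≠ 0 := fun h => by
    have := congrArg (Polynomial.eval 0) h
    simp at this
  obtain ⟨d, hd⟩ : ∃ d, m / 2 = ∑ i, α i / 2 + d := Nat.exists_eq_add_of_le (by omega)
  rw [Finset.prod_congr rfl fun i _ => hR (α i), Finset.prod_mul_distrib,
    Finset.prod_pow_eq_pow_sum, hR m, hd, pow_add, mul_left_comm, mul_assoc] at hC'
  have h := congrArg (Polynomial.eval (-1)) (mul_left_cancel₀ (pow_ne_zero _ hX) hC')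
  simp only [Polynomial.eval_mul, Polynomial.eval_prod, hR', Polynomial.eval_pow,
    Polynomial.eval_add, Polynomial.eval_one, Polynomial.eval_X, add_neg_cancel] at h
  push_cast
  rw [h, hd]
  split_ifs with ho
  · obtain rfl : d = 0 := by omega
    simp
  · rw [zero_pow (by omega), zero_mul]

instance (n r : ℕ) [NeZero n] (α : Fin r → ℕ) : Finite (Words n r α) := by
  unfold Words
  infer_instance

/-- The word obtained from `w` by rotating the positions by `t`. -/
def Words.rotate {n r : ℕ} [NeZero n] {α : Fin r → ℕ} (w : Words n r α) (t : ZMod n) :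
    Words n r α :=
  ⟨fun x => w.1 (x + t), fun i => by
    rw [← w.2 i, ← Fintype.card_subtype, ← Fintype.card_subtype]
    exact Fintype.card_congr ((Equiv.addRight t).subtypeEquiv fun _ => Iff.rfl)⟩

/-- The word obtained from `w` by reflecting the positions. -/
def Words.reflect {n r : ℕ} [NeZero n] {α : Fin r → ℕ} (w : Words n r α) : Words n r α :=
  ⟨fun x => w.1 (-x), fun i => by
    rw [← w.2 i, ← Fintype.card_subtype, ← Fintype.card_subtype]
    exact Fintype.card_congr ((Equiv.neg (ZMod n)).subtypeEquiv fun _ => Iff.rfl)⟩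

/-- A word whose multiplicities are coprime has no nontrivial rotational symmetry. -/
theorem Words.eq_zero_of_rotate_eq {n r : ℕ} [NeZero n] {α : Fin r → ℕ}
    (hgcd : Finset.univ.gcd α = 1) (w : Words n r α) {t : ZMod n}
    (ht : ∀ x, w.1 (x + t) = w.1 x) : t = 0 := by
  let H : AddSubgroup (ZMod n) :=
    { carrier := {h | ∀ x, w.1 (x + h) = w.1 x}
      zero_mem' := fun x => by rw [add_zero]
      add_mem' := fun {a b} ha hb x => by rw [← add_assoc, hb, ha]
      neg_mem' := fun {a} ha x => by rw [← ha (x + -a), neg_add_cancel_right] }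
  have hout : ∀ x : ZMod n, w.1 (QuotientAddGroup.mk (s := H) x).out = w.1 x := fun x => by
    obtain ⟨h, hh⟩ := QuotientAddGroup.mk_out_eq_add H x
    rw [hh]
    exact h.2 x
  have hdvd : Nat.card H ∣ Finset.univ.gcd α := Finset.dvd_gcd fun i _ => by
    have e := QuotientAddGroup.preimageMkEquivAddSubgroupProdSet H {q | w.1 q.out = i}
    have hc := Nat.card_congr e
    rw [Nat.card_prod] at hc
    have hi : α i = Nat.card (QuotientAddGroup.mk (s := H) ⁻¹' {q | w.1 q.out = i}) := by
      rw [← w.2 i, ← Fintype.card_subtype, ← Nat.card_eq_fintype_card]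
      exact Nat.card_congr (Equiv.subtypeEquivRight fun x => by simp [hout])
    rw [hi, hc]
    exact dvd_mul_right _ _
  rw [hgcd, Nat.dvd_one, AddSubgroup.card_eq_one] at hdvd
  have htH : t ∈ H := ht
  rwa [hdvd, AddSubgroup.mem_bot] at htH

/-- When the multiplicities are coprime, every necklace consists of `n` words. -/
theorem card_words_eq_mul_card_necklaces {n r : ℕ} [NeZero n] {α : Fin r → ℕ}
    (hgcd : Finset.univ.gcd α = 1) (P : Words n r α → Prop)
    (hP : ∀ w t, P w → P (w.rotate t)) :
    Nat.card {w // P w} = n * Nat.card {N : Quotient (neckSetoid n r α) //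
      ∀ w : Words n r α, Quotient.mk (neckSetoid n r α) w = N → P w} := by
  let Φ : ZMod n × {N : Quotient (neckSetoid n r α) //
      ∀ w : Words n r α, Quotient.mk (neckSetoid n r α) w = N → P w} → {w // P w} :=
    fun p => ⟨p.2.1.out.rotate p.1, hP _ _ (p.2.2 _ (Quotient.out_eq _))⟩
  have hmk : ∀ p, Quotient.mk (neckSetoid n r α) (Φ p).1 = p.2.1 := fun p => by
    conv_rhs => rw [← Quotient.out_eq p.2.1]
    exact Quotient.sound ((neckSetoid n r α).symm ⟨p.1, fun x => rfl⟩)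
  have hΦ : Function.Bijective Φ := by
    constructor
    · rintro ⟨t, N⟩ ⟨t', N'⟩ h
      obtain rfl : N = N' := Subtype.ext (by rw [← hmk (t, N), h, hmk])
      have h0 : t - t' = 0 := N.1.out.eq_zero_of_rotate_eq hgcd fun x => by
        have := congrFun (congrArg (fun w => w.1.1) h) (x - t')
        simp only [Φ, Words.rotate, sub_add_cancel] at this
        rw [← this]
        exact congrArg N.1.out.1 (by ring)
      rw [sub_eq_zero.1 h0]
    · rintro ⟨w, hw⟩
      obtain ⟨t, ht⟩ : ∃ t : ZMod n, ∀ x, w.1 x = (Quotient.mk (neckSetoid n r α) w).out.1 (x + t) :=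
        Quotient.exact (Quotient.out_eq (Quotient.mk (neckSetoid n r α) w))
      refine ⟨(t, ⟨Quotient.mk _ w, fun w' h => ?_⟩), Subtype.ext (Subtype.ext (funext fun x => ?_))⟩
      · obtain ⟨t', ht'⟩ : ∃ t' : ZMod n, ∀ x, w'.1 x = w.1 (x + t') := Quotient.exact h.symm
        rw [show w' = w.rotate t' from Subtype.ext (funext ht')]
        exact hP w t' hw
      · exact (ht x).symm
  rw [← Nat.card_congr (Equiv.ofBijective Φ hΦ), Nat.card_prod, Nat.card_zmod]

theorem ReflSymm.rotate {n r : ℕ} [NeZero n] {α : Fin r → ℕ} {w : Words n r α}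
    (hw : ReflSymm w) (s : ZMod n) : ReflSymm (w.rotate s) := by
  obtain ⟨t, ht⟩ := hw
  refine ⟨t - s - s, fun x => ?_⟩
  simp only [Words.rotate]
  rw [← ht]
  exact congrArg w.1 (by ring)

theorem ReflSymm.reflect {n r : ℕ} [NeZero n] {α : Fin r → ℕ} {w : Words n r α}
    (hw : ReflSymm w) : ReflSymm w.reflect := by
  obtain ⟨t, ht⟩ := hw
  refine ⟨-t, fun x => ?_⟩
  simp only [Words.reflect]
  rw [← ht]
  exact congrArg w.1 (by ring)

/-- A reflection of `ZMod n` has at most two fixed points. -/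
theorem card_fixed_sub_le_two {n : ℕ} [NeZero n] (t : ZMod n) :
    (Finset.univ.filter fun x : ZMod n => t - x = x).card ≤ 2 := by
  rcases (Finset.univ.filter fun x : ZMod n => t - x = x).eq_empty_or_nonempty with h | ⟨y, hy⟩
  · simp [h]
  · refine le_trans (Finset.card_le_card_of_injOn (fun x => x - y) ?_ ?_)
      (IsAddCyclic.card_nsmul_eq_zero_le (α := ZMod n) two_pos)
    · intro x hx
      simp only [Finset.coe_filter, Finset.mem_filter, Finset.mem_univ, true_and,
        Set.mem_ofPred_eq] at hx hy ⊢
      linear_combination hy - hx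
    · exact fun x _ x' _ h => sub_left_injective h

theorem sum_card_fixed_sub (n : ℕ) [NeZero n] :
    ∑ t : ZMod n, (Finset.univ.filter fun x : ZMod n => t - x = x).card = n := by
  have h := Finset.card_eq_sum_card_fiberwise (s := (Finset.univ : Finset (ZMod n)))
    (t := Finset.univ) (f := fun x => x + x) (fun _ _ => Finset.mem_coe.2 (Finset.mem_univ _))
  rw [Finset.card_univ, ZMod.card] at h
  conv_rhs => rw [h]
  simp only [sub_eq_iff_eq_add, eq_comm (b := (_ : ZMod n) + _)]

theorem card_reflection_invariant_mul {n r : ℕ} [NeZero n] {α : Fin r → ℕ}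
    (hsum : ∑ i, α i = n) (hodd : 0 < (Finset.univ.filter fun i => Odd (α i)).card) (t : ZMod n) :
    Nat.card {w : ZMod n → Fin r // (∀ i, (Finset.univ.filter fun x => w x = i).card = α i) ∧
        ∀ x, w (t - x) = w x} * ∏ i, (α i / 2).factorial =
      (Finset.univ.filter fun x : ZMod n => t - x = x).card *
        if (Finset.univ.filter fun i => Odd (α i)).card ≤ 2 then (∑ i, α i / 2).factorial
        else 0 := by
  let _ : LinearOrder (ZMod n) := LinearOrder.lift' ZMod.val (ZMod.val_injective n)
  have hs : Function.Involutive fun x => t - x := sub_sub_cancel t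
  have hα : ∑ i, α i = Fintype.card (ZMod n) := by rw [hsum, ZMod.card]
  have h2 := card_fixed_sub_le_two t
  have hF : (Finset.univ.filter fun x : ZMod n => t - x = x).card +
      2 * (Finset.univ.filter fun x : ZMod n => x < t - x).card = n := by
    conv_rhs => rw [← ZMod.card n, ← card_fixed_add_two_mul hs]
    congr!
  have hO := sum_eq_card_odd_add α
  by_cases hFO : (Finset.univ.filter fun x : ZMod n => t - x = x).card =
      (Finset.univ.filter fun i => Odd (α i)).card
  · have hfact : ∀ k : ℕ, 0 < k → k ≤ 2 → k.factorial = k := fun k h0 h2 => by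
      interval_cases k <;> rfl
    rw [if_pos (hFO ▸ h2), ← hfact _ (hFO ▸ hodd) h2]
    convert card_invariant_mul_prod_factorial hs α hα (by convert hFO)
  · by_cases hlt : (Finset.univ.filter fun x : ZMod n => t - x = x).card <
        (Finset.univ.filter fun i => Odd (α i)).card
    · have : IsEmpty {w : ZMod n → Fin r //
          (∀ i, (Finset.univ.filter fun x => w x = i).card = α i) ∧ ∀ x, w (t - x) = w x} :=
        ⟨fun w => hlt.not_ge <| (Finset.card_le_card
          (odd_subset_image_fixed hs w.2.1 w.2.2)).trans Finset.card_image_le⟩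
      rw [Nat.card_of_isEmpty, zero_mul, eq_comm, mul_eq_zero, ite_eq_right_iff]
      omega
    · omega

theorem card_reflSymm_mul_prod_factorial {n r : ℕ} [NeZero n] {α : Fin r → ℕ}
    (hsum : ∑ i, α i = n) (hgcd : Finset.univ.gcd α = 1) :
    Nat.card {w : Words n r α // ReflSymm w} * ∏ i, (α i / 2).factorial =
      n * if (Finset.univ.filter fun i => Odd (α i)).card ≤ 2 then (∑ i, α i / 2).factorial
        else 0 := by
  let Φ : (Σ t : ZMod n, {w : ZMod n → Fin r //
      (∀ i, (Finset.univ.filter fun x => w x = i).card = α i) ∧ ∀ x, w (t - x) = w x}) →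
      {w : Words n r α // ReflSymm w} := fun p => ⟨⟨p.2.1, p.2.2.1⟩, p.1, p.2.2.2⟩
  have hΦ : Function.Bijective Φ := by
    constructor
    · rintro ⟨t, w, hwα, hw⟩ ⟨t', w', hwα', hw'⟩ h
      obtain rfl : w = w' := congrArg (fun w => w.1.1) h
      obtain rfl : t' = t := sub_eq_zero.1 <|
        Words.eq_zero_of_rotate_eq hgcd ⟨w, hwα⟩ fun x => by
          change w (x + (t' - t)) = w x
          rw [← hw x, ← hw' (t - x)]
          exact congrArg w (by ring)
      rfl
    · rintro ⟨⟨w, hwα⟩, t, hw⟩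
      exact ⟨⟨t, w, hwα, hw⟩, rfl⟩
  rw [← Nat.card_congr (Equiv.ofBijective Φ hΦ), Nat.card_sigma, Finset.sum_mul,
    Finset.sum_congr rfl fun t _ =>
      card_reflection_invariant_mul hsum (exists_odd_of_gcd_eq_one hgcd) t,
    ← Finset.sum_mul, sum_card_fixed_sub]

theorem Words.reflSymm_iff_of_braceSetoid {n r : ℕ} [NeZero n] {α : Fin r → ℕ}
    {w w' : Words n r α} (h : (braceSetoid n r α) w w') : ReflSymm w ↔ ReflSymm w' := by
  have key : ∀ {w w' : Words n r α}, (braceSetoid n r α) w w' → ReflSymm w → ReflSymm w' := by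
    rintro w w' ⟨t, ht | ht⟩ hw
    · rw [show w' = w.rotate t from Subtype.ext (funext ht)]
      exact hw.rotate t
    · rw [show w' = (w.rotate t).reflect from Subtype.ext <| funext fun x => by
        rw [ht]
        exact congrArg w.1 (by ring)]
      exact (hw.rotate t).reflect
  exact ⟨key h, key ((braceSetoid n r α).symm h)⟩

/-- The necklaces are the bracelets together with a second copy of the asymmetric bracelets. -/
theorem card_necklaces_eq {n r : ℕ} [NeZero n] {α : Fin r → ℕ} :
    Nat.card (Quotient (neckSetoid n r α)) = Nat.card (Quotient (braceSetoid n r α)) +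
      Nat.card {b : Quotient (braceSetoid n r α) //
        ∀ w : Words n r α, Quotient.mk (braceSetoid n r α) w = b → ¬ ReflSymm w} := by
  let Φ : Quotient (braceSetoid n r α) ⊕ {b : Quotient (braceSetoid n r α) //
      ∀ w : Words n r α, Quotient.mk (braceSetoid n r α) w = b → ¬ ReflSymm w} →
      Quotient (neckSetoid n r α) :=
    Sum.elim (fun b => Quotient.mk _ b.out) (fun b => Quotient.mk _ b.1.out.reflect)
  let π : Quotient (neckSetoid n r α) → Quotient (braceSetoid n r α) :=
    Quotient.map id fun _ _ ⟨t, ht⟩ => ⟨t, Or.inl ht⟩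
  have hl : ∀ b, π (Φ (Sum.inl b)) = b := fun b => Quotient.out_eq b
  have hr : ∀ b, π (Φ (Sum.inr b)) = b.1 := fun b => by
    conv_rhs => rw [← Quotient.out_eq b.1]
    exact Quotient.sound ((braceSetoid n r α).symm ⟨0, Or.inr fun x => by rw [zero_sub]; rfl⟩)
  have hne : ∀ b, Φ (Sum.inl b.1) ≠ Φ (Sum.inr b) := fun b h => by
    obtain ⟨t, ht⟩ : ∃ t : ZMod n, ∀ x, b.1.out.1 (-x) = b.1.out.1 (x + t) := Quotient.exact h
    refine b.2 _ (Quotient.out_eq _) ⟨t, fun x => ?_⟩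
    rw [sub_eq_neg_add, ← ht, neg_neg]
  have hΦ : Function.Bijective Φ := by
    constructor
    · rintro (b | b) (b' | b') h
      · rw [← hl b, h, hl]
      · obtain rfl : b = b'.1 := by rw [← hl b, h, hr]
        exact absurd h (hne b')
      · obtain rfl : b.1 = b' := by rw [← hr b, h, hl]
        exact absurd h.symm (hne b)
      · rw [show b = b' from Subtype.ext (by rw [← hr b, h, hr])]
    · intro N
      induction N using Quotient.inductionOn with | _ w => ?_
      by_cases hN : ∃ t : ZMod n, ∀ x,
          w.1 x = (Quotient.mk (braceSetoid n r α) w).out.1 (x + t)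
      · exact ⟨Sum.inl (Quotient.mk _ w), Quotient.sound hN⟩
      · obtain ⟨t, ht | ht⟩ : ∃ t : ZMod n,
            (∀ x, w.1 x = (Quotient.mk (braceSetoid n r α) w).out.1 (x + t)) ∨
            (∀ x, w.1 x = (Quotient.mk (braceSetoid n r α) w).out.1 (t - x)) :=
          Quotient.exact (Quotient.out_eq (Quotient.mk (braceSetoid n r α) w))
        · exact absurd ⟨t, ht⟩ hN
        · refine ⟨Sum.inr ⟨Quotient.mk _ w, fun w' hw' hsymm => hN ?_⟩, Quotient.sound ⟨-t, ?_⟩⟩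
          · obtain ⟨s, hs⟩ := (Words.reflSymm_iff_of_braceSetoid (Quotient.exact
              (hw'.trans (Quotient.out_eq (Quotient.mk (braceSetoid n r α) w)).symm))).1 hsymm
            refine ⟨s - t, fun x => ?_⟩
            rw [ht, ← hs]
            exact congrArg _ (by ring)
          · intro x
            rw [ht]
            exact congrArg (Quotient.mk (braceSetoid n r α) w).out.1 (by ring)
  rw [← Nat.card_congr (Equiv.ofBijective Φ hΦ), Nat.card_sum]

/-- The bracelets are the symmetric necklaces together with the asymmetric bracelets. -/
theorem card_bracelets_eq {n r : ℕ} [NeZero n] {α : Fin r → ℕ} :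
    Nat.card (Quotient (braceSetoid n r α)) =
      Nat.card {N : Quotient (neckSetoid n r α) //
        ∀ w : Words n r α, Quotient.mk (neckSetoid n r α) w = N → ReflSymm w} +
      Nat.card {b : Quotient (braceSetoid n r α) //
        ∀ w : Words n r α, Quotient.mk (braceSetoid n r α) w = b → ¬ ReflSymm w} := by
  let π : Quotient (neckSetoid n r α) → Quotient (braceSetoid n r α) :=
    Quotient.map id fun _ _ ⟨t, ht⟩ => ⟨t, Or.inl ht⟩
  let Φ : {N : Quotient (neckSetoid n r α) //
        ∀ w : Words n r α, Quotient.mk (neckSetoid n r α) w = N → ReflSymm w} ⊕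
      {b : Quotient (braceSetoid n r α) //
        ∀ w : Words n r α, Quotient.mk (braceSetoid n r α) w = b → ¬ ReflSymm w} →
      Quotient (braceSetoid n r α) :=
    Sum.elim (fun N => π N.1) Subtype.val
  have hne : ∀ N b, Φ (Sum.inl N) ≠ Φ (Sum.inr b) := by
    rintro ⟨N, hN⟩ b h
    induction N using Quotient.inductionOn with | _ w => ?_
    exact b.2 w h (hN w rfl)
  have hΦ : Function.Bijective Φ := by
    constructor
    · rintro (⟨N, hN⟩ | b) (⟨N', hN'⟩ | b') h
      · induction N using Quotient.inductionOn with | _ w => ?_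
        induction N' using Quotient.inductionOn with | _ w' => ?_
        congr 2
        obtain ⟨t, ht | ht⟩ : ∃ t : ZMod n,
            (∀ x, w'.1 x = w.1 (x + t)) ∨ (∀ x, w'.1 x = w.1 (t - x)) := Quotient.exact h
        · exact Quotient.sound ⟨t, ht⟩
        · obtain ⟨s, hs⟩ := hN w rfl
          refine Quotient.sound ⟨s - t, fun x => ?_⟩
          rw [ht, ← hs]
          exact congrArg w.1 (by ring)
      · exact absurd h (hne _ _)
      · exact absurd h.symm (hne _ _)
      · exact congrArg Sum.inr (Subtype.ext h)
    · intro b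
      induction b using Quotient.inductionOn with | _ w => ?_
      by_cases hw : ReflSymm w
      · refine ⟨Sum.inl ⟨Quotient.mk _ w, fun w' h => ?_⟩, rfl⟩
        obtain ⟨t, ht⟩ : ∃ t : ZMod n, ∀ x, w'.1 x = w.1 (x + t) := Quotient.exact h.symm
        exact (Words.reflSymm_iff_of_braceSetoid ⟨t, Or.inl ht⟩).1 hw
      · exact ⟨Sum.inr ⟨Quotient.mk _ w, fun w' h hw' =>
          hw ((Words.reflSymm_iff_of_braceSetoid (Quotient.exact h)).1 hw')⟩, rfl⟩
  rw [← Nat.card_congr (Equiv.ofBijective Φ hΦ), Nat.card_sum]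

theorem eval_one_eq_card_necklaces {n r : ℕ} [NeZero n] {α : Fin r → ℕ} (hsum : ∑ i, α i = n)
    (hgcd : Finset.univ.gcd α = 1) {C : Polynomial ℤ}
    (hC : qInt n * C * ∏ i, qFactorial (α i) = qFactorial n) :
    C.eval 1 = Nat.card (Quotient (neckSetoid n r α)) := by
  have h1 := eval_one_mul_prod_factorial hC
  have h2 := card_content_mul_prod_factorial (ι := ZMod n) α (by rw [hsum, ZMod.card])
  have h3 : Nat.card (Words n r α) = n * Nat.card (Quotient (neckSetoid n r α)) := by
    have := card_words_eq_mul_card_necklaces hgcd (fun _ : Words n r α => True)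
      (fun _ _ _ => trivial)
    rwa [Nat.card_congr (Equiv.subtypeUnivEquiv fun _ => trivial),
      Nat.card_congr (Equiv.subtypeUnivEquiv fun _ _ _ => trivial)] at this
  rw [ZMod.card] at h2
  change Nat.card (Words n r α) * _ = _ at h2
  rw [h3] at h2
  have hP : ((∏ i, (α i).factorial : ℕ) : ℤ) ≠ 0 :=
    Nat.cast_ne_zero.2 (Finset.prod_ne_zero_iff.2 fun i _ => Nat.factorial_ne_zero _)
  have hn : (n : ℤ) ≠ 0 := Nat.cast_ne_zero.2 (NeZero.ne n)
  refine mul_left_cancel₀ hn (mul_right_cancel₀ hP ?_)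
  rw [h1, ← h2]
  push_cast
  ring

theorem eval_neg_one_eq_card_reflSymm {n r : ℕ} [NeZero n] {α : Fin r → ℕ}
    (hsum : ∑ i, α i = n) (hgcd : Finset.univ.gcd α = 1) {C : Polynomial ℤ}
    (hC : qInt n * C * ∏ i, qFactorial (α i) = qFactorial n) :
    C.eval (-1) = Nat.card {N : Quotient (neckSetoid n r α) //
      ∀ w : Words n r α, Quotient.mk (neckSetoid n r α) w = N → ReflSymm w} := by
  have h1 := eval_neg_one_mul_prod_factorial hsum (exists_odd_of_gcd_eq_one hgcd) hC
  have h2 := card_reflSymm_mul_prod_factorial hsum hgcd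
  rw [card_words_eq_mul_card_necklaces hgcd _ fun w t hw => ReflSymm.rotate hw t, mul_assoc] at h2
  have h3 := Nat.eq_of_mul_eq_mul_left (NeZero.pos n) h2
  have hP : ((∏ i, (α i / 2).factorial : ℕ) : ℤ) ≠ 0 :=
    Nat.cast_ne_zero.2 (Finset.prod_ne_zero_iff.2 fun i _ => Nat.factorial_ne_zero _)
  refine mul_right_cancel₀ hP ?_
  rw [h1, ← Nat.cast_mul, h3]
  push_cast
  rfl

theorem eval_one_add_eval_neg_one (C : Polynomial ℤ) : C.eval 1 + C.eval (-1) =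
    2 * ∑ i ∈ Finset.range (C.natDegree + 1), if Even i then C.coeff i else 0 := by
  rw [Polynomial.eval_eq_sum_range, Polynomial.eval_eq_sum_range, ← Finset.sum_add_distrib,
    Finset.mul_sum]
  refine Finset.sum_congr rfl fun i _ => ?_
  split_ifs with h
  · rw [h.neg_one_pow]
    ring
  · rw [(Nat.not_even_iff_odd.1 h).neg_one_pow]
    ring

theorem eval_one_sub_eval_neg_one (C : Polynomial ℤ) : C.eval 1 - C.eval (-1) =
    2 * ∑ i ∈ Finset.range (C.natDegree + 1), if ¬ Even i then C.coeff i else 0 := by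
  rw [Polynomial.eval_eq_sum_range, Polynomial.eval_eq_sum_range, ← Finset.sum_sub_distrib,
    Finset.mul_sum]
  refine Finset.sum_congr rfl fun i _ => ?_
  split_ifs with h
  · rw [h.neg_one_pow]
    ring
  · rw [(Nat.not_even_iff_odd.1 h).neg_one_pow]
    ring

/-- **Theorem `braceletcount`**: for a composition `α` of `n` with `gcd(α) = 1`, writing
`C(α;q) = Σ aᵢ qⁱ = (1/[n]_q)·[n choose α]_q`, the sum `a₀+a₂+⋯ = ½(C(α;1)+C(α;−1))`
counts all bracelets, the sum `a₁+a₃+⋯ = ½(C(α;1)−C(α;−1))` counts asymmetric bracelets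
(those that are `τ₀`-orbits of two necklaces, i.e. whose necklaces are not
reflection-symmetric), and `C(α;−1)` counts the necklaces fixed by the reflection `τ₀`
(Stembridge's `q = −1` phenomenon). -/
theorem bracelet_count
    (n r : ℕ) [NeZero n] (α : Fin r → ℕ) (hsum : ∑ i, α i = n)
    (hgcd : Finset.univ.gcd α = 1)
    (C : Polynomial ℤ)
    (hC : qInt n * C * ∏ i, qFactorial (α i) = qFactorial n) :
    (∑ i ∈ Finset.range (C.natDegree + 1), (if Even i then C.coeff i else 0)) =
        Nat.card (Quotient (braceSetoid n r α)) ∧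
    (∑ i ∈ Finset.range (C.natDegree + 1), (if ¬ Even i then C.coeff i else 0)) =
        Nat.card {b : Quotient (braceSetoid n r α) //
          ∀ w : Words n r α, Quotient.mk (braceSetoid n r α) w = b → ¬ ReflSymm w} ∧
    C.eval 1 + C.eval (-1) = 2 * Nat.card (Quotient (braceSetoid n r α)) ∧
    C.eval 1 - C.eval (-1) = 2 * Nat.card {b : Quotient (braceSetoid n r α) //
          ∀ w : Words n r α, Quotient.mk (braceSetoid n r α) w = b → ¬ ReflSymm w} ∧
    C.eval (-1) = Nat.card {N : Quotient (neckSetoid n r α) //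
          ∀ w : Words n r α, Quotient.mk (neckSetoid n r α) w = N → ReflSymm w} := by
  have h1 := eval_one_eq_card_necklaces hsum hgcd hC
  have h2 := eval_neg_one_eq_card_reflSymm hsum hgcd hC
  have h3 := card_necklaces_eq (n := n) (α := α)
  have h4 := card_bracelets_eq (n := n) (α := α)
  have h5 := eval_one_add_eval_neg_one C
  have h6 := eval_one_sub_eval_neg_one C
  refine ⟨?_, ?_, ?_, ?_, h2⟩ <;> omega
end

section
/- Fix n ≥ 3, a subgroup H ≤ S_n such that C acts freely on X = S_n/H by left multiplication, and an integer m ≥ 2 with n not divisible by m. Let ζ be a primitive m-th root of unity, k = ⌊(n−1)/m⌋, and Y(q) = X(q)/[n]_q where X(q) = ℋ(ℂ[x_1,…,x_n]^H;q)/ℋ(ℂ[x_1,…,x_n]^{S_n};q). Then Y(ζ) = (1−ζ)·∏_{i=1}^{n−1−km}(1−ζ^i) · Σ_{λ ⊢ n−km} |Fix_X(m^k, λ)| / ∏_{i≥1} (i(1−ζ^i))^{c_i} c_i!, where for each partition λ of n−km, c_i denotes the number of parts of λ equal to i. -/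
/-- The `n`-cycle `x ↦ x + 1` on `ℤ/nℤ`, as a permutation. -/
def cyc (n : ℕ) : Equiv.Perm (ZMod n) := Equiv.addLeft (1 : ZMod n)

/-- The dimension of the degree-`d` component of the ring of `H`-invariant polynomials in
`ℂ[x_1, …, x_n]`, where `H ≤ S_n` permutes the variables. -/
noncomputable def invDim (n : ℕ) [NeZero n] (H : Subgroup (Equiv.Perm (ZMod n))) (d : ℕ) : ℕ :=
  Module.finrank ℂ
    ↥((MvPolynomial.homogeneousSubmodule (ZMod n) ℂ d) ⊓
      ⨅ σ ∈ H, LinearMap.eqLocus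
        (MvPolynomial.rename (σ : ZMod n → ZMod n) : MvPolynomial (ZMod n) ℂ →ₐ[ℂ] _).toLinearMap
        LinearMap.id)

/-- The Hilbert series `ℋ(ℂ[x]^H; q)` of the invariant ring, as a power series over `ℚ`. -/
noncomputable def hilbertSeries (n : ℕ) [NeZero n] (H : Subgroup (Equiv.Perm (ZMod n))) :
    PowerSeries ℚ :=
  PowerSeries.mk fun d => (invDim n H d : ℚ)

/-- Exponent vectors of the monomials of degree `d` in variables indexed by `α`. -/
@[ext]
structure ExpVec (α : Type*) (d : ℕ) where
  /-- The vector of exponents. -/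
  val : α →₀ ℕ
  /-- The exponents add up to `d`. -/
  degree_val : val.degree = d

noncomputable instance (α : Type*) (d : ℕ) : MulAction (Equiv.Perm α) (ExpVec α d) where
  smul σ s := ⟨s.1.mapDomain σ, by rw [Finsupp.degree_mapDomain, s.2]⟩
  one_smul s := ExpVec.ext (Finsupp.mapDomain_id (v := s.1))
  mul_smul σ τ s := ExpVec.ext (Finsupp.mapDomain_comp (v := s.1) (f := τ) (g := σ))

lemma ExpVec.smul_apply {α : Type*} {d : ℕ} (σ : Equiv.Perm α) (s : ExpVec α d) (x : α) :
    (σ • s).1 (σ x) = s.1 x :=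
  Finsupp.mapDomain_apply σ.injective _ _

instance (α : Type*) [Finite α] (d : ℕ) : Finite (ExpVec α d) := by
  classical
  cases nonempty_fintype α
  refine Finite.of_injective
    (β := ↥(Finset.finsuppAntidiag (Finset.univ : Finset α) d))
    (fun s => ⟨s.1, ?_⟩) ?_
  · rw [Finset.mem_finsuppAntidiag]
    exact ⟨by rw [← Finsupp.degree_eq_sum, s.2], Finset.subset_univ _⟩
  · intro s t h
    exact ExpVec.ext (congrArg Subtype.val h)

lemma finrank_homogeneous_invariants {α : Type*} [Finite α] (H : Subgroup (Equiv.Perm α)) (d : ℕ) :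
    Module.finrank ℂ
      ↥((MvPolynomial.homogeneousSubmodule α ℂ d) ⊓
        ⨅ σ ∈ H, LinearMap.eqLocus
          (MvPolynomial.rename (σ : α → α) : MvPolynomial α ℂ →ₐ[ℂ] _).toLinearMap
          LinearMap.id) =
      Nat.card (Quotient (MulAction.orbitRel H (ExpVec α d))) := by
  classical
  cases nonempty_fintype α
  have := Fintype.ofFinite (ExpVec α d)
  have := Fintype.ofFinite (Quotient (MulAction.orbitRel H (ExpVec α d)))
  set V := (MvPolynomial.homogeneousSubmodule α ℂ d) ⊓
        ⨅ σ ∈ H, LinearMap.eqLocus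
          (MvPolynomial.rename (σ : α → α) : MvPolynomial α ℂ →ₐ[ℂ] _).toLinearMap
          LinearMap.id with hV
  have memV : ∀ p, p ∈ V ↔ p.IsHomogeneous d ∧ ∀ σ ∈ H, MvPolynomial.rename σ p = p := by
    intro p
    simp [hV, Submodule.mem_iInf, LinearMap.mem_eqLocus]
  have coeff_smul : ∀ p ∈ V, ∀ h : H, ∀ s : ExpVec α d,
      MvPolynomial.coeff (h • s).1 p = MvPolynomial.coeff s.1 p := by
    intro p hp h s
    conv_lhs => rw [← ((memV p).1 hp).2 h.1 h.2]
    exact MvPolynomial.coeff_rename_mapDomain _ h.1.injective _ _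
  let T : V →ₗ[ℂ] (Quotient (MulAction.orbitRel H (ExpVec α d)) → ℂ) :=
    { toFun := fun p q => MvPolynomial.coeff q.out.1 p.1
      map_add' := fun p p' => by ext; simp
      map_smul' := fun c p => by ext; simp }
  have hT : ∀ p : V, ∀ s : ExpVec α d, T p ⟦s⟧ = MvPolynomial.coeff s.1 p.1 := by
    intro p s
    obtain ⟨h, hh⟩ : (⟦s⟧ : Quotient (MulAction.orbitRel H (ExpVec α d))).out ∈
        MulAction.orbit H s := MulAction.orbitRel_apply.1 (Quotient.mk_out s)
    change MvPolynomial.coeff (⟦s⟧ : Quotient (MulAction.orbitRel H (ExpVec α d))).out.1 p.1 = _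
    rw [← hh]
    exact coeff_smul p.1 p.2 h s
  have hbij : Function.Bijective T := by
    constructor
    · intro p p' hpp
      ext s
      by_cases hs : s.degree = d
      · have := congrFun hpp ⟦⟨s, hs⟩⟧
        exact (hT p _).symm.trans (this.trans (hT p' _))
      · rw [((memV _).1 p.2).1.coeff_eq_zero hs, ((memV _).1 p'.2).1.coeff_eq_zero hs]
    · intro c
      have hmem : (∑ s : ExpVec α d, MvPolynomial.monomial s.1 (c ⟦s⟧)) ∈ V := by
        rw [memV]
        refine ⟨MvPolynomial.IsHomogeneous.sum _ _ _ fun s _ =>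
          MvPolynomial.isHomogeneous_monomial _ s.2, fun σ hσ => ?_⟩
        rw [map_sum]
        refine Fintype.sum_equiv (MulAction.toPerm σ) _ _ fun s => ?_
        rw [MvPolynomial.rename_monomial]
        have : (⟦(MulAction.toPerm σ) s⟧ : Quotient (MulAction.orbitRel H (ExpVec α d))) = ⟦s⟧ :=
          Quotient.sound (MulAction.orbitRel_apply.2 ⟨⟨σ, hσ⟩, rfl⟩)
        rw [this]
        rfl
      refine ⟨⟨_, hmem⟩, ?_⟩
      ext q
      induction q using Quotient.inductionOn with
      | h s =>
        rw [hT]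
        simp only [MvPolynomial.coeff_sum, MvPolynomial.coeff_monomial]
        rw [Finset.sum_eq_single s]
        · simp
        · intro t _ hts
          exact if_neg fun h => hts (ExpVec.ext h)
        · simp
  rw [(LinearEquiv.ofBijective T hbij).finrank_eq, Module.finrank_fintype_fun_eq_card,
    Nat.card_eq_fintype_card]

lemma card_orbits_mul_card {α : Type*} [Finite α] (H : Subgroup (Equiv.Perm α)) [Fintype H]
    (d : ℕ) :
    Nat.card (Quotient (MulAction.orbitRel H (ExpVec α d))) * Nat.card H =
      ∑ h : H, Nat.card {s : ExpVec α d // h.1 • s = s} := by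
  classical
  have := Fintype.ofFinite (ExpVec α d)
  have := Fintype.ofFinite (Quotient (MulAction.orbitRel H (ExpVec α d)))
  have := MulAction.sum_card_fixedBy_eq_card_orbits_mul_card_group H (ExpVec α d)
  rw [Nat.card_eq_fintype_card, Nat.card_eq_fintype_card, ← this]
  refine Finset.sum_congr rfl fun h _ => ?_
  rw [← Nat.card_eq_fintype_card]
  rfl

lemma PowerSeries.mk_dvd_mul_one_sub_X_pow {R : Type*} [CommRing R] {w : ℕ} (hw : 0 < w) :
    PowerSeries.mk (fun e => if w ∣ e then (1 : R) else 0) * (1 - PowerSeries.X ^ w) = 1 := by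
  ext e
  rw [mul_sub, mul_one, map_sub, PowerSeries.coeff_mul_X_pow', PowerSeries.coeff_mk,
    PowerSeries.coeff_one]
  by_cases he : w ≤ e
  · have h0 : e ≠ 0 := by omega
    have : w ∣ e - w ↔ w ∣ e := (Nat.dvd_sub_iff_left he dvd_rfl)
    simp [he, h0, this]
  · by_cases h0 : e = 0
    · simp [h0, hw.ne']
    · simp [he, h0, Nat.not_dvd_of_pos_of_lt (Nat.pos_of_ne_zero h0) (not_le.1 he)]

lemma mk_card_weighted_mul_prod {R : Type*} [CommRing R] {ι : Type*} [Fintype ι] (w : ι → ℕ)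
    (hw : ∀ i, 0 < w i) :
    PowerSeries.mk (fun d => (Nat.card {g : ι → ℕ // ∑ i, w i * g i = d} : R)) *
      ∏ i, (1 - PowerSeries.X ^ w i) = 1 := by
  classical
  have key : PowerSeries.mk (fun d => (Nat.card {g : ι → ℕ // ∑ i, w i * g i = d} : R)) =
      ∏ i, PowerSeries.mk (fun e => if w i ∣ e then (1 : R) else 0) := by
    ext d
    rw [PowerSeries.coeff_prod, PowerSeries.coeff_mk]
    simp only [PowerSeries.coeff_mk, Finset.prod_ite_zero, Finset.prod_const_one, Finset.mem_univ,
      true_imp_iff]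
    rw [Finset.sum_boole, ← Fintype.card_coe, ← Nat.card_eq_fintype_card]
    congr 1
    refine Nat.card_congr (Equiv.ofBijective
      (fun g => ⟨Finsupp.equivFunOnFinite.symm fun i => w i * g.1 i, ?_⟩) ⟨?_, ?_⟩)
    · simpa using g.2
    · intro g g' h
      refine Subtype.ext (funext fun i => Nat.eq_of_mul_eq_mul_left (hw i) ?_)
      exact DFunLike.congr_fun (congrArg Subtype.val h) i
    · rintro ⟨l, hl⟩
      simp only [Finset.mem_filter, Finset.mem_finsuppAntidiag] at hl
      refine ⟨⟨fun i => l i / w i, ?_⟩, ?_⟩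
      · rw [← hl.1.1]
        exact Finset.sum_congr rfl fun i _ => Nat.mul_div_cancel' (hl.2 i)
      · exact Subtype.ext (Finsupp.ext fun i => Nat.mul_div_cancel' (hl.2 i))
  rw [key, ← Finset.prod_mul_distrib]
  exact Finset.prod_eq_one fun i _ => PowerSeries.mk_dvd_mul_one_sub_X_pow (hw i)

lemma card_fixed_expVec {α ι : Type*} [Fintype α] [DecidableEq α] [Fintype ι] [DecidableEq ι]
    (σ : Equiv.Perm α) (π : α → ι) (hπ : Function.Surjective π)
    (h : ∀ x y, π x = π y ↔ σ.SameCycle x y) (d : ℕ) :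
    Nat.card {s : ExpVec α d // σ • s = s} =
      Nat.card {g : ι → ℕ // ∑ i, (Finset.univ.filter (π · = i)).card * g i = d} := by
  have hsum : ∀ g : ι → ℕ, ∑ x, g (π x) = ∑ i, (Finset.univ.filter (π · = i)).card * g i := by
    intro g
    rw [← Finset.sum_fiberwise Finset.univ π]
    refine Finset.sum_congr rfl fun i _ => ?_
    rw [Finset.sum_congr rfl (g := fun _ => g i), Finset.sum_const, smul_eq_mul]
    intro x hx
    rw [(Finset.mem_filter.1 hx).2]
  symm
  refine Nat.card_congr (Equiv.ofBijective
    (fun g => ⟨⟨Finsupp.equivFunOnFinite.symm (g.1 ∘ π), ?_⟩, ?_⟩) ⟨?_, ?_⟩)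
  · rw [Finsupp.degree_eq_sum]
    exact (hsum g.1).trans g.2
  · refine ExpVec.ext (Finsupp.ext fun x => ?_)
    obtain ⟨x, rfl⟩ := σ.surjective x
    rw [ExpVec.smul_apply]
    exact congrArg g.1 ((h _ _).2 (σ.sameCycle_apply_right.2 (.refl _ _)))
  · intro g g' hgg
    refine Subtype.ext (funext fun i => ?_)
    obtain ⟨x, rfl⟩ := hπ i
    exact DFunLike.congr_fun (congrArg (fun s => s.1.1) hgg) x
  · rintro ⟨s, hs⟩
    have hinv : ∀ x, s.1 (σ x) = s.1 x := fun x => by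
      conv_lhs => rw [← hs]
      exact ExpVec.smul_apply σ s x
    have hcyc : ∀ x y, σ.SameCycle x y → s.1 x = s.1 y := by
      rintro x y hxy
      obtain ⟨i, -, rfl⟩ := hxy.exists_pow_eq'
      clear hxy
      induction i with
      | zero => simp
      | succ i ih => rw [ih, pow_succ', Equiv.Perm.mul_apply, hinv]
    have hsec : ∀ x, s.1 (Function.surjInv hπ (π x)) = s.1 x := fun x =>
      hcyc _ _ ((h _ _).1 (Function.surjInv_eq hπ _))
    refine ⟨⟨fun i => s.1 (Function.surjInv hπ i), ?_⟩, ?_⟩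
    · rw [← hsum]
      refine (Finset.sum_congr rfl fun x _ => hsec x).trans ?_
      rw [← Finsupp.degree_eq_sum, s.2]
    · exact Subtype.ext (ExpVec.ext (Finsupp.ext fun x => hsec x))

/-- The cycle of `σ` containing `x`, fixed points being recorded separately. -/
def cycleIndex {α : Type*} [Fintype α] [DecidableEq α] (σ : Equiv.Perm α) (x : α) :
    σ.cycleFactorsFinset ⊕ {x // σ x = x} :=
  if h : σ x = x then .inr ⟨x, h⟩ else
    .inl ⟨σ.cycleOf x, Equiv.Perm.cycleOf_mem_cycleFactorsFinset_iff.2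
      (Equiv.Perm.mem_support.2 h)⟩

lemma mk_card_fixed_mul_prod {R : Type*} [CommRing R] {α : Type*} [Fintype α] [DecidableEq α]
    (σ : Equiv.Perm α) :
    PowerSeries.mk (fun d => (Nat.card {s : ExpVec α d // σ • s = s} : R)) *
      (σ.partition.parts.map fun l => 1 - PowerSeries.X ^ l).prod = 1 := by
  have inl_iff : ∀ x (c : σ.cycleFactorsFinset),
      cycleIndex σ x = .inl c ↔ x ∈ c.1.support := by
    intro x c
    unfold cycleIndex
    split_ifs with h
    · simp only [false_iff]
      exact fun hx => Equiv.Perm.mem_support.1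
        (Equiv.Perm.mem_cycleFactorsFinset_support_le c.2 hx) h
    · rw [Sum.inl.injEq, ← Subtype.coe_inj]
      constructor
      · intro h'
        rw [← h', Equiv.Perm.mem_support_cycleOf_iff]
        exact ⟨.refl _ _, Equiv.Perm.mem_support.2 h⟩
      · intro hx
        exact (Equiv.Perm.cycle_is_cycleOf hx c.2).symm
  have inr_iff : ∀ x (y : {x // σ x = x}), cycleIndex σ x = .inr y ↔ x = y.1 := by
    intro x y
    unfold cycleIndex
    split_ifs with h
    · simp [Subtype.ext_iff]
    · simp only [false_iff]
      rintro rfl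
      exact h y.2
  have hsurj : Function.Surjective (cycleIndex σ) := by
    rintro (c | y)
    · obtain ⟨x, hx⟩ := (Equiv.Perm.mem_cycleFactorsFinset_iff.1 c.2).1.nonempty_support
      exact ⟨x, (inl_iff _ _).2 hx⟩
    · exact ⟨y.1, (inr_iff _ _).2 rfl⟩
  have hsame : ∀ x y, cycleIndex σ x = cycleIndex σ y ↔ σ.SameCycle x y := by
    intro x y
    by_cases hx : σ x = x
    · have : cycleIndex σ x = .inr ⟨x, hx⟩ := dif_pos hx
      rw [this, eq_comm, inr_iff, Equiv.Perm.sameCycle_comm]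
      exact ⟨fun h => h ▸ .refl _ _, fun h => h.eq_of_right hx⟩
    · have : cycleIndex σ x = .inl ⟨σ.cycleOf x, _⟩ := dif_neg hx
      rw [this, eq_comm, inl_iff, Equiv.Perm.mem_support_cycleOf_iff]
      exact and_iff_left (Equiv.Perm.mem_support.2 hx)
  simp_rw [card_fixed_expVec σ (cycleIndex σ) hsurj hsame]
  convert mk_card_weighted_mul_prod (R := R)
    (fun i => (Finset.univ.filter (cycleIndex σ · = i)).card) ?_ using 2
  · rw [Fintype.prod_sum_type, Equiv.Perm.parts_partition, Multiset.map_add, Multiset.prod_add]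
    congr 1
    · rw [Equiv.Perm.cycleType_def, Multiset.map_map, ← Finset.prod_eq_multiset_prod,
        ← Finset.prod_coe_sort]
      refine Finset.prod_congr rfl fun c _ => ?_
      simp only [inl_iff, Finset.filter_univ_mem, Function.comp_apply]
    · simp only [inr_iff, Multiset.map_replicate, Multiset.prod_replicate, pow_one]
      simp only [Finset.filter_eq', Finset.mem_univ, if_true, Finset.card_singleton, pow_one,
        Finset.prod_const, Finset.card_univ]
      rw [← Finset.card_compl, Fintype.card_subtype]
      congr 2
      ext x
      simp
  · intro i
    obtain ⟨x, hx⟩ := hsurj i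
    exact Finset.card_pos.2 ⟨x, by simpa using hx⟩

instance finite_multiset_card_eq_sum_eq (n d : ℕ) :
    Finite {s : Multiset ℕ // s.card = n ∧ s.sum = d} := by
  refine Set.Finite.subset (Set.finite_Iic (n • Multiset.range (d + 1))) ?_
  rintro s ⟨hn, hd⟩
  refine Multiset.le_iff_count.2 fun a => ?_
  by_cases ha : a ∈ s
  · have h1 : (Multiset.range (d + 1)).count a = 1 :=
      Multiset.count_eq_one_of_mem (Multiset.nodup_range _)
        (Multiset.mem_range.2 (Nat.lt_succ_of_le (hd ▸ Multiset.le_sum_of_mem ha)))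
    rw [Multiset.count_nsmul, h1, mul_one, ← hn]
    exact Multiset.count_le_card _ _
  · simp [Multiset.count_eq_zero_of_notMem ha]

lemma card_multiset_card_succ_sum (n d : ℕ) :
    Nat.card {s : Multiset ℕ // s.card = n + 1 ∧ s.sum = d} =
      Nat.card {s : Multiset ℕ // s.card = n ∧ s.sum = d} +
        if n + 1 ≤ d then
          Nat.card {s : Multiset ℕ // s.card = n + 1 ∧ s.sum = d - (n + 1)} else 0 := by
  have hshift : ∀ s : Multiset ℕ, (s.map (· + 1)).sum = s.sum + s.card := fun s => by
    simp [Multiset.sum_map_add]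
  split_ifs with hd
  · rw [← Nat.card_sum]
    symm
    refine Nat.card_congr (Equiv.ofBijective
      (Sum.elim (fun s => ⟨0 ::ₘ s.1, by simp [s.2.1], by simp [s.2.2]⟩)
        (fun s => ⟨s.1.map (· + 1), by simp [s.2.1], by
          rw [hshift, s.2.1, s.2.2]; omega⟩)) ⟨?_, ?_⟩)
    · rintro (⟨s, hs⟩ | ⟨s, hs⟩) (⟨t, ht⟩ | ⟨t, ht⟩) h
      · simpa using h
      · have h' : 0 ::ₘ s = t.map (· + 1) := congrArg Subtype.val h
        have : 0 ∈ t.map (· + 1) := h' ▸ Multiset.mem_cons_self _ _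
        simp at this
      · have h' : s.map (· + 1) = 0 ::ₘ t := congrArg Subtype.val h
        have : 0 ∈ s.map (· + 1) := h' ▸ Multiset.mem_cons_self _ _
        simp at this
      · have h' : s.map (· + 1) = t.map (· + 1) := congrArg Subtype.val h
        have := Multiset.map_injective (add_left_injective 1) h'
        subst this
        rfl
    · rintro ⟨u, hu, hs⟩
      by_cases h0 : 0 ∈ u
      · obtain ⟨t, rfl⟩ := Multiset.exists_cons_of_mem h0
        exact ⟨.inl ⟨t, by simpa using hu, by simpa using hs⟩, rfl⟩
      · have hmap : (u.map (· - 1)).map (· + 1) = u := by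
          rw [Multiset.map_map]
          conv_rhs => rw [← Multiset.map_id u]
          refine Multiset.map_congr rfl fun x hx => ?_
          have : x ≠ 0 := fun h => h0 (h ▸ hx)
          simp only [Function.comp_apply, id]
          omega
        refine ⟨.inr ⟨u.map (· - 1), by simpa using hu, ?_⟩, Subtype.ext hmap⟩
        have := hshift (u.map (· - 1))
        rw [hmap, Multiset.card_map, hu, hs] at this
        omega
  · rw [add_zero]
    symm
    refine Nat.card_congr (Equiv.ofBijective
      (fun s => ⟨0 ::ₘ s.1, by simp [s.2.1], by simp [s.2.2]⟩) ⟨?_, ?_⟩)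
    · rintro ⟨s, hs⟩ ⟨t, ht⟩ h
      simpa using h
    · rintro ⟨u, hu, hs⟩
      have h0 : 0 ∈ u := by
        by_contra h0
        have := Multiset.card_nsmul_le_sum (s := u) (a := 1) fun x hx =>
          Nat.one_le_iff_ne_zero.2 fun h => h0 (h ▸ hx)
        rw [hu, hs, smul_eq_mul] at this
        omega
      obtain ⟨t, rfl⟩ := Multiset.exists_cons_of_mem h0
      exact ⟨⟨t, by simpa using hu, by simpa using hs⟩, rfl⟩

lemma mk_card_multiset_mul_prod {R : Type*} [CommRing R] (n : ℕ) :
    PowerSeries.mk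
        (fun d => (Nat.card {s : Multiset ℕ // s.card = n ∧ s.sum = d} : R)) *
      ∏ i ∈ Finset.range n, (1 - PowerSeries.X ^ (i + 1)) = 1 := by
  induction n with
  | zero =>
    ext d
    rw [Finset.range_zero, Finset.prod_empty, mul_one, PowerSeries.coeff_mk, PowerSeries.coeff_one]
    split_ifs with hd
    · subst hd
      rw [Nat.card_eq_one_iff_unique.2 ⟨⟨fun s t => Subtype.ext ?_⟩, ⟨⟨0, rfl, rfl⟩⟩⟩, Nat.cast_one]
      rw [Multiset.card_eq_zero.1 s.2.1, Multiset.card_eq_zero.1 t.2.1]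
    · have : IsEmpty {s : Multiset ℕ // s.card = 0 ∧ s.sum = d} := by
        refine ⟨fun s => hd ?_⟩
        rw [← s.2.2, Multiset.card_eq_zero.1 s.2.1, Multiset.sum_zero]
      rw [Nat.card_of_isEmpty, Nat.cast_zero]
  | succ n ih =>
    rw [Finset.prod_range_succ, mul_comm (Finset.prod _ _), ← mul_assoc]
    refine Eq.trans ?_ ih
    congr 1
    ext d
    rw [mul_sub, mul_one, map_sub, PowerSeries.coeff_mul_X_pow', PowerSeries.coeff_mk,
      PowerSeries.coeff_mk, PowerSeries.coeff_mk, card_multiset_card_succ_sum]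
    split_ifs <;> simp

lemma card_orbits_top {α : Type*} [Fintype α] (d : ℕ) :
    Nat.card (Quotient (MulAction.orbitRel (⊤ : Subgroup (Equiv.Perm α)) (ExpVec α d))) =
      Nat.card {s : Multiset ℕ // s.card = Fintype.card α ∧ s.sum = d} := by
  classical
  let f : ExpVec α d → {s : Multiset ℕ // s.card = Fintype.card α ∧ s.sum = d} := fun s =>
    ⟨Finset.univ.val.map s.1, by simp, by
      rw [← Finset.sum_eq_multiset_sum, ← Finsupp.degree_eq_sum, s.2]⟩
  have hf : ∀ s t, f s = f t ↔ t ∈ MulAction.orbit (⊤ : Subgroup (Equiv.Perm α)) s := by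
    intro s t
    constructor
    · intro h
      have hcount : ∀ c, Nonempty ({x // s.1 x = c} ≃ {x // t.1 x = c}) := by
        intro c
        have := congrArg (fun u => u.1.count c) h
        simp only [f, Multiset.count_map] at this
        rw [← Fintype.card_eq, Fintype.card_subtype, Fintype.card_subtype]
        simpa [Finset.card_def, eq_comm] using this
      let e := Equiv.ofFiberEquiv fun c => (hcount c).some
      refine ⟨⟨e, trivial⟩, ExpVec.ext (Finsupp.ext fun x => ?_)⟩
      obtain ⟨x, rfl⟩ := e.surjective x
      exact (ExpVec.smul_apply e s x).trans (Equiv.ofFiberEquiv_map _ x).symm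
    · rintro ⟨⟨σ, -⟩, rfl⟩
      refine Subtype.ext ?_
      change Multiset.map _ _ = Multiset.map (σ • s).1 _
      conv_rhs => rw [← Multiset.map_univ_val_equiv σ, Multiset.map_map]
      refine Multiset.map_congr rfl fun x _ => ?_
      exact (ExpVec.smul_apply σ s x).symm
  refine Nat.card_congr (Equiv.ofBijective (Quotient.lift f ?_) ⟨?_, ?_⟩)
  · intro s t h
    exact ((hf t s).2 (MulAction.orbitRel_apply.1 h)).symm
  · intro p q
    induction p, q using Quotient.inductionOn₂ with
    | h s t =>
      intro h
      exact Quotient.sound (MulAction.orbitRel_apply.2 ((hf t s).1 h.symm))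
  · rintro ⟨u, hu, hd⟩
    obtain ⟨l, rfl⟩ := Quot.exists_rep u
    have e : α ≃ Fin l.length := Fintype.equivFinOfCardEq (by simpa using hu.symm)
    have hl : Finset.univ.val.map (fun x => l.get (e x)) = (l : Multiset ℕ) := by
      rw [← Function.comp_def l.get, ← Multiset.map_map, Multiset.map_univ_val_equiv e]
      simp
    refine ⟨⟦⟨Finsupp.equivFunOnFinite.symm fun x => l.get (e x), ?_⟩⟧, ?_⟩
    · rw [Finsupp.degree_eq_sum, ← hd]
      exact congrArg Multiset.sum hl
    · exact Subtype.ext hl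

lemma mk_invDim_mul_card (n : ℕ) [NeZero n] (H : Subgroup (Equiv.Perm (ZMod n))) [Fintype H] :
    PowerSeries.mk (fun d => (invDim n H d : ℂ)) * PowerSeries.C (Nat.card H : ℂ) =
      ∑ h : H, PowerSeries.mk
        (fun d => (Nat.card {s : ExpVec (ZMod n) d // h.1 • s = s} : ℂ)) := by
  ext d
  rw [PowerSeries.coeff_mul_C, map_sum]
  simp only [PowerSeries.coeff_mk]
  rw [← Nat.cast_sum, ← card_orbits_mul_card, Nat.cast_mul, ← finrank_homogeneous_invariants]
  rfl

lemma mk_invDim_top_mul_prod (n : ℕ) [NeZero n] :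
    PowerSeries.mk (fun d => (invDim n ⊤ d : ℂ)) *
      ∏ i ∈ Finset.range n, (1 - PowerSeries.X ^ (i + 1)) = 1 := by
  refine Eq.trans ?_ (mk_card_multiset_mul_prod n)
  congr 1
  ext d
  have h := card_orbits_top (α := ZMod n) d
  rw [ZMod.card, ← finrank_homogeneous_invariants] at h
  rw [PowerSeries.coeff_mk, PowerSeries.coeff_mk, ← h]
  rfl

lemma map_hilbertSeries (n : ℕ) [NeZero n] (H : Subgroup (Equiv.Perm (ZMod n))) :
    PowerSeries.map (algebraMap ℚ ℂ) (hilbertSeries n H) =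
      PowerSeries.mk (fun d => (invDim n H d : ℂ)) := by
  ext d
  simp [hilbertSeries]

open Polynomial in
/-- The factor `1 - X ^ i` with its possible zero `1 - X ^ m` removed. -/
noncomputable def reducedFactor (m i : ℕ) : ℂ[X] :=
  if m ∣ i then ∑ t ∈ Finset.range (i / m), (X ^ m) ^ t else 1 - X ^ i

open Polynomial in
lemma pow_mul_reducedFactor (m i : ℕ) :
    (1 - X ^ m) ^ (if m ∣ i then 1 else 0) * reducedFactor m i = 1 - X ^ i := by
  unfold reducedFactor
  split_ifs with h
  · obtain ⟨j, rfl⟩ := h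
    rcases Nat.eq_zero_or_pos m with rfl | hm
    · simp
    · rw [Nat.mul_div_cancel_left _ hm, pow_one, mul_neg_geom_sum, pow_mul]
  · simp

lemma eval_reducedFactor_of_not_dvd {m i : ℕ} (h : ¬ m ∣ i) (ζ : ℂ) :
    (reducedFactor m i).eval ζ = 1 - ζ ^ i := by
  simp [reducedFactor, h]

lemma eval_reducedFactor_mul {m : ℕ} (hm : 0 < m) {ζ : ℂ} (hζ : ζ ^ m = 1) (j : ℕ) :
    (reducedFactor m (m * j)).eval ζ = j := by
  simp [reducedFactor, hζ, Polynomial.eval_finsetSum, hm]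

lemma eval_reducedFactor_ne_zero {m i : ℕ} (hm : 0 < m) (hi : 0 < i) {ζ : ℂ}
    (hζ : IsPrimitiveRoot ζ m) : (reducedFactor m i).eval ζ ≠ 0 := by
  by_cases h : m ∣ i
  · obtain ⟨j, rfl⟩ := h
    rw [eval_reducedFactor_mul hm hζ.pow_eq_one]
    exact Nat.cast_ne_zero.2 (Nat.pos_of_mul_pos_left hi).ne'
  · rw [eval_reducedFactor_of_not_dvd h, sub_ne_zero]
    exact fun h' => h (hζ.dvd_of_pow_eq_one _ h'.symm)

open Polynomial in
lemma prod_one_sub_pow_multiset (m : ℕ) (s : Multiset ℕ) :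
    (s.map fun l => (1 - X ^ l : ℂ[X])).prod =
      (1 - X ^ m) ^ s.countP (m ∣ ·) * (s.map (reducedFactor m)).prod := by
  induction s using Multiset.induction_on with
  | empty => simp
  | cons a s ih =>
    rw [Multiset.map_cons, Multiset.prod_cons, ih, ← pow_mul_reducedFactor m a,
      Multiset.countP_cons, Multiset.map_cons, Multiset.prod_cons, pow_add]
    ring

open Polynomial in
lemma prod_one_sub_pow_range (m n : ℕ) :
    ∏ i ∈ Finset.range n, (1 - X ^ (i + 1) : ℂ[X]) =
      (1 - X ^ m) ^ (n / m) * ∏ i ∈ Finset.range n, reducedFactor m (i + 1) := by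
  rw [Finset.prod_congr rfl fun i _ => (pow_mul_reducedFactor m (i + 1)).symm,
    Finset.prod_mul_distrib, Finset.prod_pow_eq_pow_sum, ← Finset.card_filter,
    Nat.card_multiples]

lemma countP_dvd_mul_le_sum {m : ℕ} (s : Multiset ℕ) (hs : ∀ l ∈ s, 0 < l) :
    s.countP (m ∣ ·) * m ≤ s.sum := by
  induction s using Multiset.induction_on with
  | empty => simp
  | cons a s ih =>
    have ih := ih fun l hl => hs l (Multiset.mem_cons_of_mem hl)
    rw [Multiset.countP_cons, Multiset.sum_cons, add_mul]
    split_ifs with h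
    · have := Nat.le_of_dvd (hs a (Multiset.mem_cons_self _ _)) h
      omega
    · omega

lemma countP_parts_partition_le {m n : ℕ} (hm : 0 < m) (P : n.Partition) :
    P.parts.countP (m ∣ ·) ≤ n / m := by
  rw [Nat.le_div_iff_mul_le hm]
  exact (countP_dvd_mul_le_sum _ fun _ h => P.parts_pos h).trans_eq P.parts_sum

open Polynomial in
lemma card_mul_aeval_quotient (n : ℕ) [NeZero n] (H : Subgroup (Equiv.Perm (ZMod n)))
    [Fintype H] {m : ℕ} (hm : 0 < m) {ζ : ℂ} (hζ : IsPrimitiveRoot ζ m) (Xp : ℤ[X])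
    (hX : ((Xp.map (Int.castRingHom ℚ) : ℚ[X]) : PowerSeries ℚ) * hilbertSeries n ⊤ =
      hilbertSeries n H) :
    (Nat.card H : ℂ) * aeval ζ Xp =
      ∑ h : H, 0 ^ (n / m - h.1.partition.parts.countP (m ∣ ·)) *
        (∏ i ∈ Finset.range n, (reducedFactor m (i + 1)).eval ζ) /
          (h.1.partition.parts.map fun l => (reducedFactor m l).eval ζ).prod := by
  classical
  set U : ℂ[X] := ∏ i ∈ Finset.range n, reducedFactor m (i + 1) with hU
  set u : H → ℂ[X] := fun h => (h.1.partition.parts.map (reducedFactor m)).prod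
    with hu
  set a : H → ℕ := fun h => h.1.partition.parts.countP (m ∣ ·) with ha
  have ha_le : ∀ h, a h ≤ n / m := fun h => by
    have := countP_parts_partition_le hm h.1.partition
    exact this.trans_eq (by rw [ZMod.card])
  have hu_eval : ∀ h, (u h).eval ζ ≠ 0 := fun h => by
    rw [hu, eval_multiset_prod, Multiset.map_map]
    refine Multiset.prod_ne_zero fun h0 => ?_
    obtain ⟨l, hl, h0⟩ := Multiset.mem_map.1 h0
    exact eval_reducedFactor_ne_zero hm (h.1.partition.parts_pos hl) hζ h0
  set P : H → PowerSeries ℂ := fun h => PowerSeries.mk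
    (fun d => (Nat.card {s : ExpVec (ZMod n) d // h.1 • s = s} : ℂ)) with hP
  have hPu : ∀ h, P h * (((1 - X ^ m) ^ a h * u h : ℂ[X]) : PowerSeries ℂ) = 1 := fun h => by
    rw [← mk_card_fixed_mul_prod (R := ℂ) h.1, ha, hu, ← prod_one_sub_pow_multiset,
      ← coeToPowerSeries.ringHom_apply, map_multiset_prod, Multiset.map_map]
    simp [hP, Function.comp_def]
  have hXℂ : ((Xp.map (Int.castRingHom ℂ) : ℂ[X]) : PowerSeries ℂ) *
      PowerSeries.mk (fun d => (invDim n ⊤ d : ℂ)) =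
        PowerSeries.mk (fun d => (invDim n H d : ℂ)) := by
    have := congrArg (PowerSeries.map (algebraMap ℚ ℂ)) hX
    rw [map_mul, map_hilbertSeries, map_hilbertSeries] at this
    rw [← this]
    congr 1
    ext d
    simp
  have hser : ((Xp.map (Int.castRingHom ℂ) * C (Nat.card H : ℂ) : ℂ[X]) : PowerSeries ℂ) =
      ∑ h, P h * (((1 - X ^ m) ^ (n / m) * U : ℂ[X]) : PowerSeries ℂ) := by
    have htop := mk_invDim_top_mul_prod n
    have hprod : (((1 - X ^ m) ^ (n / m) * U : ℂ[X]) : PowerSeries ℂ) =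
        ∏ i ∈ Finset.range n, (1 - PowerSeries.X ^ (i + 1)) := by
      rw [hU, ← prod_one_sub_pow_range, ← coeToPowerSeries.ringHom_apply, map_prod]
      simp
    rw [← hprod] at htop
    rw [← Finset.sum_mul, ← mk_invDim_mul_card, ← hXℂ, coe_mul, coe_C]
    linear_combination (-((Xp.map (Int.castRingHom ℂ) : ℂ[X]) : PowerSeries ℂ) *
      PowerSeries.C (Nat.card H : ℂ)) * htop
  have hpoly : Xp.map (Int.castRingHom ℂ) * C (Nat.card H : ℂ) * ∏ h, u h =
      ∑ h, (1 - X ^ m) ^ (n / m - a h) * U * ∏ h' ∈ Finset.univ.erase h, u h' := by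
    apply coe_injective
    rw [coe_mul, hser, Finset.sum_mul]
    refine Eq.trans ?_ (map_sum coeToPowerSeries.ringHom _ _).symm
    refine Finset.sum_congr rfl fun h _ => ?_
    rw [coeToPowerSeries.ringHom_apply, ← Finset.mul_prod_erase _ _ (Finset.mem_univ h),
      ← Nat.sub_add_cancel (ha_le h), pow_add, Nat.add_sub_cancel]
    have := hPu h
    simp only [coe_mul] at this ⊢
    linear_combination (((1 - X ^ m) ^ (n / m - a h) : ℂ[X]) : PowerSeries ℂ) *
      (U : PowerSeries ℂ) * ((∏ h' ∈ Finset.univ.erase h, u h' : ℂ[X]) : PowerSeries ℂ) * this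
  have heval := congrArg (eval ζ) hpoly
  simp only [eval_mul, eval_C, eval_prod, eval_finsetSum, eval_pow, eval_sub, eval_one, eval_X,
    hζ.pow_eq_one, sub_self] at heval
  have hne : ∏ h, (u h).eval ζ ≠ 0 := Finset.prod_ne_zero_iff.2 fun h _ => hu_eval h
  rw [← mul_left_inj' hne, aeval_def, ← eval_map, mul_comm (Nat.card H : ℂ)]
  refine heval.trans ?_
  rw [Finset.sum_mul]
  refine Finset.sum_congr rfl fun h _ => ?_
  rw [← Finset.mul_prod_erase _ _ (Finset.mem_univ h), hU, eval_prod]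
  have : (h.1.partition.parts.map fun l => (reducedFactor m l).eval ζ).prod = (u h).eval ζ := by
    rw [hu, eval_multiset_prod, Multiset.map_map]
    rfl
  rw [this]
  have := hu_eval h
  field_simp
  ring

lemma card_fixed_quotient_mul_card {G : Type*} [Group G] [Finite G] (H : Subgroup G) (γ : G) :
    Nat.card {x : G ⧸ H // γ • x = x} * Nat.card H =
      Nat.card (Subgroup.centralizer {γ}) * Nat.card {h : H // IsConj γ h.1} := by
  classical
  cases nonempty_fintype G
  have := Fintype.ofFinite {h : H // IsConj γ h.1}
  have hmem : ∀ g : G, γ • (g : G ⧸ H) = g ↔ g⁻¹ * γ * g ∈ H := fun g => by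
    rw [eq_comm, MulAction.Quotient.smul_coe, QuotientGroup.eq, smul_eq_mul, mul_assoc]
  have h1 : Nat.card {g : G // g⁻¹ * γ * g ∈ H} =
      Nat.card H * Nat.card {x : G ⧸ H // γ • x = x} := by
    rw [← Nat.card_prod]
    refine Nat.card_congr ((Equiv.subtypeEquivRight fun g => (hmem g).symm).trans
      (QuotientGroup.preimageMkEquivSubgroupProdSet H {x | γ • x = x}))
  have h2 : Nat.card {g : G // g⁻¹ * γ * g ∈ H} =
      Nat.card (Σ h : {h : H // IsConj γ h.1}, {g : G // g⁻¹ * γ * g = h.1.1}) := by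
    refine Nat.card_congr
      { toFun := fun g => ⟨⟨⟨_, g.2⟩, isConj_iff.2 ⟨g.1⁻¹, by simp⟩⟩, ⟨g.1, rfl⟩⟩
        invFun := fun p => ⟨p.2.1, p.2.2.symm ▸ p.1.1.2⟩
        left_inv := fun g => rfl
        right_inv := ?_ }
    rintro ⟨⟨⟨h, hh⟩, hc⟩, ⟨g, hg⟩⟩
    dsimp only at hg
    subst hg
    rfl
  rw [mul_comm, ← h1, h2, Nat.card_sigma, Finset.sum_congr rfl (g := fun _ =>
    Nat.card (Subgroup.centralizer {γ})), Finset.sum_const, Finset.card_univ,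
    ← Nat.card_eq_fintype_card, smul_eq_mul, mul_comm]
  rintro ⟨⟨h, hh⟩, hc⟩ -
  obtain ⟨c, rfl⟩ := isConj_iff.1 hc
  refine Nat.card_congr ((Equiv.mulRight c).subtypeEquiv fun g => ?_)
  simp only [Equiv.coe_mulRight, Subgroup.mem_centralizer_singleton_iff]
  constructor
  · intro h
    have : γ = g * (c * γ * c⁻¹) * g⁻¹ := by rw [← h]; group
    conv_rhs => rw [this]
    group
  · intro h
    have : γ = (g * c)⁻¹ * (g * c * γ) := by group
    conv_rhs => rw [this, h]
    group

lemma Multiset.eq_of_filter_two_le_eq {s t : Multiset ℕ} (hs : ∀ i ∈ s, 0 < i)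
    (ht : ∀ i ∈ t, 0 < i) (hsum : s.sum = t.sum)
    (h : s.filter (2 ≤ ·) = t.filter (2 ≤ ·)) : s = t := by
  have key : ∀ u : Multiset ℕ, (∀ i ∈ u, 0 < i) →
      u = u.filter (2 ≤ ·) + Multiset.replicate (u.filter fun i => ¬ 2 ≤ i).card 1 := by
    intro u hu
    conv_lhs => rw [← Multiset.filter_add_not (2 ≤ ·) u]
    congr 1
    refine Multiset.eq_replicate_card.2 fun i hi => ?_
    obtain ⟨hi, hi2⟩ := Multiset.mem_filter.1 hi
    have := hu i hi
    omega
  have hs' := key s hs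
  have ht' := key t ht
  have hs'' := congrArg Multiset.sum hs'
  have ht'' := congrArg Multiset.sum ht'
  rw [Multiset.sum_add, Multiset.sum_replicate, smul_eq_mul, mul_one] at hs'' ht''
  rw [hs', ht', h]
  congr 2
  rw [h] at hs''
  omega

lemma parts_partition_eq_iff_cycleType {α : Type*} [Fintype α] [DecidableEq α] {m k r : ℕ}
    (hm : 2 ≤ m) (hr : k * m + r = Fintype.card α) (L : Nat.Partition r) (σ : Equiv.Perm α) :
    σ.partition.parts = Multiset.replicate k m + L.parts ↔
      σ.cycleType = Multiset.replicate k m + L.parts.filter (2 ≤ ·) := by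
  have hfilter : (Multiset.replicate k m + L.parts).filter (2 ≤ ·) =
      Multiset.replicate k m + L.parts.filter (2 ≤ ·) := by
    rw [Multiset.filter_add, Multiset.filter_eq_self.2]
    intro i hi
    rwa [Multiset.eq_of_mem_replicate hi]
  rw [← Equiv.Perm.filter_parts_partition_eq_cycleType, ← hfilter]
  refine ⟨fun h => by rw [h], fun h => Multiset.eq_of_filter_two_le_eq
    (fun i hi => σ.partition.parts_pos hi) ?_ ?_ h⟩
  · intro i hi
    rcases Multiset.mem_add.1 hi with hi | hi
    · rw [Multiset.eq_of_mem_replicate hi]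
      omega
    · exact L.parts_pos hi
  · rw [σ.partition.parts_sum, Multiset.sum_add, Multiset.sum_replicate, L.parts_sum, smul_eq_mul,
      hr]

lemma card_centralizer_of_cycleType {α : Type*} [Fintype α] [DecidableEq α] {m k r : ℕ}
    (hm : 2 ≤ m) (hr : k * m + r = Fintype.card α) (hrm : r < m) (hr0 : 0 < r)
    (L : Nat.Partition r) (σ : Equiv.Perm α)
    (h : σ.cycleType = Multiset.replicate k m + L.parts.filter (2 ≤ ·)) :
    Nat.card (Subgroup.centralizer {σ}) = m ^ k * k.factorial *
      ∏ i ∈ Finset.Icc 1 r, i ^ L.parts.count i * (L.parts.count i).factorial := by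
  have hm_notMem : m ∉ L.parts := fun h => by
    have := Nat.Partition.le_of_mem_parts h
    omega
  have hfix : Fintype.card α - σ.cycleType.sum = L.parts.count 1 := by
    have hparts := (parts_partition_eq_iff_cycleType hm hr L σ).2 h
    have := congrArg (Multiset.count 1) hparts
    rw [Equiv.Perm.parts_partition, Multiset.count_add, Multiset.count_add,
      Multiset.count_replicate_self, Multiset.count_eq_zero.2, Multiset.count_replicate,
      if_neg (by omega), ← Equiv.Perm.sum_cycleType] at this
    · omega
    · exact fun h1 => absurd (Equiv.Perm.two_le_of_mem_cycleType h1) (by norm_num)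
  have hprod : σ.cycleType.prod = m ^ k * ∏ i ∈ Finset.Icc 1 r, i ^ L.parts.count i := by
    have h1 : σ.cycleType.prod = σ.partition.parts.prod := by
      rw [Equiv.Perm.parts_partition, Multiset.prod_add, Multiset.prod_replicate, one_pow, mul_one]
    rw [h1, (parts_partition_eq_iff_cycleType hm hr L σ).2 h, Multiset.prod_add,
      Multiset.prod_replicate]
    congr 1
    refine Finset.prod_multiset_count_of_subset _ _ fun i hi => ?_
    rw [Multiset.mem_toFinset] at hi
    exact Finset.mem_Icc.2 ⟨L.parts_pos hi, Nat.Partition.le_of_mem_parts hi⟩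
  have hcount : ∏ i ∈ σ.cycleType.toFinset, (σ.cycleType.count i).factorial =
      k.factorial * ∏ i ∈ Finset.Icc 2 r, (L.parts.count i).factorial := by
    have hsub : σ.cycleType.toFinset ⊆ insert m (Finset.Icc 2 r) := by
      intro i hi
      rw [Multiset.mem_toFinset, h, Multiset.mem_add, Multiset.mem_filter] at hi
      rw [Finset.mem_insert, Finset.mem_Icc]
      rcases hi with hi | hi
      · exact .inl (Multiset.eq_of_mem_replicate hi)
      · exact .inr ⟨hi.2, Nat.Partition.le_of_mem_parts hi.1⟩
    rw [Finset.prod_subset hsub, Finset.prod_insert]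
    · congr 1
      · rw [h, Multiset.count_add, Multiset.count_replicate_self, Multiset.count_filter,
          if_pos hm, Multiset.count_eq_zero.2 hm_notMem, add_zero]
      · refine Finset.prod_congr rfl fun i hi => ?_
        rw [Finset.mem_Icc] at hi
        rw [h, Multiset.count_add, Multiset.count_replicate, if_neg (by omega),
          Multiset.count_filter, if_pos hi.1, zero_add]
    · rw [Finset.mem_Icc]
      omega
    · intro i _ hi
      rw [Multiset.mem_toFinset] at hi
      rw [Multiset.count_eq_zero.2 hi, Nat.factorial_zero]
  have hIcc : Finset.Icc 1 r = insert 1 (Finset.Icc 2 r) := by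
    ext i
    simp only [Finset.mem_Icc, Finset.mem_insert]
    omega
  have hfact : ∏ i ∈ Finset.Icc 1 r, (L.parts.count i).factorial =
      (L.parts.count 1).factorial * ∏ i ∈ Finset.Icc 2 r, (L.parts.count i).factorial := by
    rw [hIcc, Finset.prod_insert (by simp)]
  rw [Equiv.Perm.nat_card_centralizer, hfix, hprod, hcount, Finset.prod_mul_distrib, hfact]
  ring

lemma Multiset.eq_replicate_of_dvd_of_sum_lt {m k : ℕ} (s : Multiset ℕ)
    (hdvd : ∀ i ∈ s, m ∣ i) (hpos : ∀ i ∈ s, 0 < i) (hcard : s.card = k)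
    (hsum : s.sum < (k + 1) * m) : s = Multiset.replicate k m := by
  refine Multiset.eq_replicate.2 ⟨hcard, fun i hi => ?_⟩
  obtain ⟨t, rfl⟩ := Multiset.exists_cons_of_mem hi
  obtain ⟨j, rfl⟩ := hdvd i hi
  have hj : j ≠ 0 := by
    rintro rfl
    simpa using hpos _ hi
  by_contra hne
  have hj2 : 2 ≤ j := by
    by_contra hj2
    exact hne (by rw [show j = 1 by omega, mul_one])
  have ht := Multiset.card_nsmul_le_sum (s := t) (a := m) fun x hx =>
    Nat.le_of_dvd (hpos x (Multiset.mem_cons_of_mem hx)) (hdvd x (Multiset.mem_cons_of_mem hx))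
  rw [Multiset.card_cons] at hcard
  rw [Multiset.sum_cons, ← hcard] at hsum
  rw [smul_eq_mul] at ht
  have : m * 2 ≤ m * j := Nat.mul_le_mul_left _ hj2
  linarith

lemma Nat.Partition.exists_parts_eq_replicate_add {N m k r : ℕ} (hr : k * m + r = N)
    (hrm : r < m) (P : Nat.Partition N) (hP : P.parts.countP (m ∣ ·) = k) :
    ∃ L : Nat.Partition r, P.parts = Multiset.replicate k m + L.parts := by
  have hsplit := Multiset.filter_add_not (m ∣ ·) P.parts
  have hsum := congrArg Multiset.sum hsplit
  rw [Multiset.sum_add, P.parts_sum] at hsum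
  have hrep : P.parts.filter (m ∣ ·) = Multiset.replicate k m := by
    refine Multiset.eq_replicate_of_dvd_of_sum_lt _ (fun i hi => (Multiset.mem_filter.1 hi).2)
      (fun i hi => P.parts_pos (Multiset.mem_filter.1 hi).1) ?_ ?_
    · rw [← Multiset.countP_eq_card_filter, hP]
    · rw [add_mul]
      omega
  rw [hrep, Multiset.sum_replicate, smul_eq_mul] at hsum
  refine ⟨⟨P.parts.filter fun i => ¬ m ∣ i,
    fun hi => P.parts_pos (Multiset.mem_filter.1 hi).1, by omega⟩, ?_⟩
  rw [← hrep, hsplit]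

lemma prod_eval_reducedFactor {m : ℕ} (hm : 0 < m) {ζ : ℂ} (hζ : IsPrimitiveRoot ζ m)
    (k : ℕ) {r : ℕ} (hrm : r < m) :
    ∏ i ∈ Finset.range (k * m + r), (reducedFactor m (i + 1)).eval ζ =
      m ^ k * k.factorial * ∏ i ∈ Finset.range r, (1 - ζ ^ (i + 1)) := by
  have hshift : ∀ j i, i + 1 < m →
      (reducedFactor m (j * m + i + 1)).eval ζ = 1 - ζ ^ (i + 1) := fun j i hi => by
    rw [eval_reducedFactor_of_not_dvd, add_assoc, pow_add, mul_comm j m, pow_mul, hζ.pow_eq_one,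
      one_pow, one_mul]
    rw [add_assoc, Nat.dvd_add_right (Dvd.intro_left j rfl)]
    exact Nat.not_dvd_of_pos_of_lt (Nat.succ_pos i) hi
  rw [Finset.prod_range_add]
  congr 1
  · induction k with
    | zero => simp
    | succ k ih =>
      obtain ⟨m, rfl⟩ := Nat.exists_eq_add_one_of_ne_zero hm.ne'
      rw [add_mul, one_mul, Finset.prod_range_add, ih, Finset.prod_range_succ,
        Finset.prod_congr rfl fun i hi => hshift k i (by rw [Finset.mem_range] at hi; omega),
        hζ.prod_one_sub_pow_eq_order, add_assoc,
        show k * (m + 1) + (m + 1) = (m + 1) * (k + 1) by ring, eval_reducedFactor_mul hm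
        hζ.pow_eq_one, Nat.factorial_succ]
      push_cast
      ring
  · exact Finset.prod_congr rfl fun i hi => hshift k i (by rw [Finset.mem_range] at hi; omega)

lemma Nat.Partition.not_dvd_of_mem_parts {m r : ℕ} (hrm : r < m) (L : Nat.Partition r) {i : ℕ}
    (hi : i ∈ L.parts) : ¬ m ∣ i :=
  Nat.not_dvd_of_pos_of_lt (L.parts_pos hi) ((Nat.Partition.le_of_mem_parts hi).trans_lt hrm)

lemma molien_term_eq_sum_partitions {m k r N : ℕ} (hm : 0 < m) (hr : k * m + r = N) (hrm : r < m)
    {ζ : ℂ} (hζ : IsPrimitiveRoot ζ m) (P : Nat.Partition N) (U : ℂ) :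
    0 ^ (k - P.parts.countP (m ∣ ·)) * U /
        (P.parts.map fun l => (reducedFactor m l).eval ζ).prod =
      ∑ L : Nat.Partition r, if P.parts = Multiset.replicate k m + L.parts then
        U / (L.parts.map fun l => 1 - ζ ^ l).prod else 0 := by
  have hcount : ∀ L : Nat.Partition r, P.parts = Multiset.replicate k m + L.parts →
      P.parts.countP (m ∣ ·) = k := fun L hL => by
    rw [hL, Multiset.countP_add, Multiset.countP_eq_card.2, Multiset.card_replicate,
      Multiset.countP_eq_zero.2, add_zero]
    · exact fun i hi => L.not_dvd_of_mem_parts hrm hi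
    · intro i hi
      rw [Multiset.eq_of_mem_replicate hi]
  by_cases hP : P.parts.countP (m ∣ ·) = k
  · obtain ⟨L, hL⟩ := P.exists_parts_eq_replicate_add hr hrm hP
    rw [Finset.sum_eq_single L, if_pos hL, hP, Nat.sub_self, pow_zero, one_mul, hL,
      Multiset.map_add, Multiset.prod_add, Multiset.map_replicate, Multiset.prod_replicate]
    · have h1 := eval_reducedFactor_mul hm hζ.pow_eq_one 1
      rw [mul_one, Nat.cast_one] at h1
      rw [h1, one_pow, one_mul]
      congr 2
      exact Multiset.map_congr rfl fun i hi =>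
        eval_reducedFactor_of_not_dvd (L.not_dvd_of_mem_parts hrm hi) ζ
    · intro L' _ hne
      refine if_neg fun hL' => hne (Nat.Partition.ext ?_)
      exact (add_left_cancel (hL.symm.trans hL')).symm
    · simp
  · have hlt : P.parts.countP (m ∣ ·) < k := by
      refine lt_of_le_of_ne ((countP_parts_partition_le hm P).trans_eq ?_) hP
      rw [← hr, mul_comm, Nat.mul_add_div hm, Nat.div_eq_of_lt hrm, add_zero]
    rw [zero_pow (by omega), zero_mul, zero_div]
    exact (Finset.sum_eq_zero fun L _ => if_neg fun hL => hP (hcount L hL)).symm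

lemma card_fixed_mul_card_eq {α : Type*} [Fintype α] [DecidableEq α]
    (H : Subgroup (Equiv.Perm α)) [Fintype H] {m k r : ℕ}
    (hm : 2 ≤ m) (hr : k * m + r = Fintype.card α) (hrm : r < m) (hr0 : 0 < r)
    (L : Nat.Partition r) (f : ℕ)
    (hf : ∀ γ : Equiv.Perm α,
      γ.cycleType = Multiset.replicate k m + L.parts.filter (2 ≤ ·) →
      f = Nat.card {x : Equiv.Perm α ⧸ H // γ • x = x}) :
    f * Nat.card H = (m ^ k * k.factorial *
      ∏ i ∈ Finset.Icc 1 r, i ^ L.parts.count i * (L.parts.count i).factorial) *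
        (Finset.univ.filter fun h : H =>
          h.1.partition.parts = Multiset.replicate k m + L.parts).card := by
  obtain ⟨γ, hγ⟩ := (Equiv.Perm.exists_with_cycleType_iff α
    (m := Multiset.replicate k m + L.parts.filter (2 ≤ ·))).2 ⟨by
      rw [Multiset.sum_add, Multiset.sum_replicate, smul_eq_mul, ← hr]
      have hle := congrArg Multiset.sum (Multiset.filter_add_not (2 ≤ ·) L.parts)
      rw [Multiset.sum_add, L.parts_sum] at hle
      omega, by
      intro i hi
      rcases Multiset.mem_add.1 hi with hi | hi
      · rwa [Multiset.eq_of_mem_replicate hi]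
      · exact (Multiset.mem_filter.1 hi).2⟩
  rw [hf γ hγ, card_fixed_quotient_mul_card, card_centralizer_of_cycleType hm hr hrm hr0 L γ hγ,
    ← Fintype.card_subtype, ← Nat.card_eq_fintype_card]
  congr 1
  refine Nat.card_congr (Equiv.subtypeEquivRight fun h => ?_)
  rw [Equiv.Perm.isConj_iff_cycleType_eq, parts_partition_eq_iff_cycleType hm hr, hγ, eq_comm]

lemma aeval_quotient_eq_sum_partitions (n : ℕ) [NeZero n] (H : Subgroup (Equiv.Perm (ZMod n)))
    {m k r : ℕ} (hm : 2 ≤ m) (hr : k * m + r = n) (hrm : r < m) (hr0 : 0 < r)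
    {ζ : ℂ} (hζ : IsPrimitiveRoot ζ m) (F : Nat.Partition r → ℕ)
    (hF : ∀ L : Nat.Partition r, ∀ γ : Equiv.Perm (ZMod n),
      γ.cycleType = Multiset.replicate k m + L.parts.filter (2 ≤ ·) →
      F L = Nat.card {x : Equiv.Perm (ZMod n) ⧸ H // γ • x = x})
    (Xp : Polynomial ℤ)
    (hX : ((Xp.map (Int.castRingHom ℚ) : Polynomial ℚ) : PowerSeries ℚ) * hilbertSeries n ⊤ =
      hilbertSeries n H) :
    Polynomial.aeval ζ Xp = (∏ i ∈ Finset.range r, (1 - ζ ^ (i + 1))) *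
      ∑ L : Nat.Partition r, (F L : ℂ) / ∏ i ∈ Finset.Icc 1 r,
        (((i : ℂ) * (1 - ζ ^ i)) ^ L.parts.count i * ((L.parts.count i).factorial : ℂ)) := by
  classical
  have : Fintype H := Fintype.ofFinite H
  have hm0 : 0 < m := by omega
  have hcard : k * m + r = Fintype.card (ZMod n) := by rw [ZMod.card, hr]
  have hk : n / m = k := by
    rw [← hr, mul_comm, Nat.mul_add_div hm0, Nat.div_eq_of_lt hrm, add_zero]
  have hH : (Nat.card H : ℂ) ≠ 0 := Nat.cast_ne_zero.2 Nat.card_pos.ne'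
  have key := card_mul_aeval_quotient n H hm0 hζ Xp hX
  have hprod := prod_eval_reducedFactor hm0 hζ k hrm
  rw [hr] at hprod
  rw [hk, hprod, Finset.sum_congr rfl fun h _ =>
    molien_term_eq_sum_partitions hm0 hcard hrm hζ h.1.partition _, Finset.sum_comm] at key
  refine mul_left_cancel₀ hH (key.trans ?_)
  rw [Finset.mul_sum, Finset.mul_sum]
  refine Finset.sum_congr rfl fun L _ => ?_
  rw [← Finset.sum_filter, Finset.sum_const, nsmul_eq_mul]
  have hL : (L.parts.map fun l => 1 - ζ ^ l).prod =
      ∏ i ∈ Finset.Icc 1 r, (1 - ζ ^ i) ^ L.parts.count i := by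
    rw [Finset.prod_multiset_map_count]
    refine Finset.prod_subset (fun i hi => ?_) fun i _ hi => ?_
    · rw [Multiset.mem_toFinset] at hi
      exact Finset.mem_Icc.2 ⟨L.parts_pos hi, Nat.Partition.le_of_mem_parts hi⟩
    · rw [Multiset.count_eq_zero.2 fun h => hi (Multiset.mem_toFinset.2 h), pow_zero]
  have hne : ∏ i ∈ Finset.Icc 1 r, (1 - ζ ^ i) ^ L.parts.count i ≠ 0 := by
    refine Finset.prod_ne_zero_iff.2 fun i hi => pow_ne_zero _ (sub_ne_zero.2 fun h => ?_)
    rw [Finset.mem_Icc] at hi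
    exact hζ.pow_ne_one_of_pos_of_lt (by omega) (by omega) h.symm
  have hne' : ∏ i ∈ Finset.Icc 1 r,
      ((i : ℂ) ^ L.parts.count i * ((L.parts.count i).factorial : ℂ)) ≠ 0 := by
    refine Finset.prod_ne_zero_iff.2 fun i hi => mul_ne_zero (pow_ne_zero _ ?_)
      (Nat.cast_ne_zero.2 (Nat.factorial_ne_zero _))
    rw [Finset.mem_Icc] at hi
    exact Nat.cast_ne_zero.2 (by omega)
  have hfix := congrArg (Nat.cast (R := ℂ))
    (card_fixed_mul_card_eq H hm hcard hrm hr0 L (F L) (hF L))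
  push_cast at hfix
  rw [hL, Finset.prod_congr rfl fun (i : ℕ) _ => show ((i : ℂ) * (1 - ζ ^ i)) ^ L.parts.count i *
    ((L.parts.count i).factorial : ℂ) = ((i : ℂ) ^ L.parts.count i *
      ((L.parts.count i).factorial : ℂ)) * (1 - ζ ^ i) ^ L.parts.count i by rw [mul_pow]; ring,
    Finset.prod_mul_distrib (g := fun i => (1 - ζ ^ i) ^ L.parts.count i)]
  field_simp
  linear_combination (-∏ i ∈ Finset.range r, (1 - ζ ^ (i + 1))) * hfix

lemma eq_of_aeval_qInt_mul_eq {m k r : ℕ} {ζ : ℂ} (hζ : IsPrimitiveRoot ζ m) (hrm : r < m)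
    (hr0 : 0 < r) {y S : ℂ} (h : Polynomial.aeval ζ (qInt (k * m + r)) * y =
      (∏ i ∈ Finset.range r, (1 - ζ ^ (i + 1))) * S) :
    y = (1 - ζ) * (∏ i ∈ Finset.Icc 1 (r - 1), (1 - ζ ^ i)) * S := by
  have hgeom : Polynomial.aeval ζ (qInt (k * m + r)) * (1 - ζ) = 1 - ζ ^ r := by
    rw [qInt, map_sum]
    simp only [map_pow, Polynomial.aeval_X]
    rw [geom_sum_mul_neg, pow_add, mul_comm k m, pow_mul, hζ.pow_eq_one, one_pow, one_mul]
  have hne : 1 - ζ ^ r ≠ 0 :=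
    sub_ne_zero.2 fun h => hζ.pow_ne_one_of_pos_of_lt hr0.ne' hrm h.symm
  obtain ⟨r, rfl⟩ := Nat.exists_eq_add_one_of_ne_zero hr0.ne'
  rw [Finset.prod_range_succ] at h
  rw [Nat.add_sub_cancel, ← Finset.Ico_add_one_right_eq_Icc, Finset.prod_Ico_eq_prod_range,
    Nat.add_sub_cancel]
  simp only [add_comm 1]
  refine mul_left_cancel₀ hne ?_
  linear_combination (1 - ζ) * h - y * hgeom

/-- **Molien evaluation, non-divisible case** (Proposition `moliencalc`(a)).  Here
`F L = |Fix_X(m^k, L)|` denotes the number of points of `X = S_n/H` fixed by any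
permutation whose cycle type is the partition of `n` consisting of `k` parts equal to `m`
together with the parts of `L` (Mathlib's `cycleType` records only cycle lengths `≥ 2`,
so that partition corresponds to `cycleType = replicate k m + filter (2 ≤ ·) L.parts`). -/
theorem molien_evaluation_nondiv
    (n : ℕ) (hn : 3 ≤ n) [NeZero n] (H : Subgroup (Equiv.Perm (ZMod n)))
    (hfree : ∀ x ∈ Subgroup.zpowers (cyc n), x ≠ 1 →
      ∀ g : Equiv.Perm (ZMod n) ⧸ H, x • g ≠ g)
    (m : ℕ) (hm : 2 ≤ m) (hnm : ¬ m ∣ n)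
    (ζ : ℂ) (hζ : IsPrimitiveRoot ζ m)
    (k : ℕ) (hk : k = (n - 1) / m)
    (F : Nat.Partition (n - k * m) → ℕ)
    (hF : ∀ L : Nat.Partition (n - k * m), ∀ γ : Equiv.Perm (ZMod n),
      γ.cycleType = Multiset.replicate k m + Multiset.filter (fun i => 2 ≤ i) L.parts →
      (F L : ℕ) = Nat.card {x : Equiv.Perm (ZMod n) ⧸ H // γ • x = x})
    (Xp Yp : Polynomial ℤ)
    (hX : ((Xp.map (Int.castRingHom ℚ) : Polynomial ℚ) : PowerSeries ℚ) * hilbertSeries n ⊤ =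
      hilbertSeries n H)
    (hY : Xp = qInt n * Yp) :
    Polynomial.aeval ζ Yp =
      (1 - ζ) * (∏ i ∈ Finset.Icc 1 (n - 1 - k * m), (1 - ζ ^ i)) *
        ∑ L : Nat.Partition (n - k * m),
          (F L : ℂ) /
            ∏ i ∈ Finset.Icc 1 (n - k * m),
              (((i : ℂ) * (1 - ζ ^ i)) ^ (L.parts.count i) *
                (Nat.factorial (L.parts.count i) : ℂ)) := by
  have hm0 : 0 < m := by omega
  have hdiv : k = n / m := by
    obtain ⟨n, rfl⟩ := Nat.exists_eq_add_one_of_ne_zero (NeZero.ne n)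
    rw [hk, Nat.succ_div, if_neg hnm, add_zero, Nat.add_sub_cancel]
  have hmod := Nat.div_add_mod' n m
  rw [← hdiv] at hmod
  have hrm : n - k * m < m := by
    have := Nat.mod_lt n hm0
    omega
  have hr0 : 0 < n - k * m := by
    have := Nat.pos_of_ne_zero fun h => hnm (Nat.dvd_of_mod_eq_zero h)
    omega
  have hr : k * m + (n - k * m) = n := by omega
  rw [Nat.sub_right_comm]
  refine eq_of_aeval_qInt_mul_eq (k := k) hζ hrm hr0 ?_
  rw [hr, ← map_mul, ← hY]
  exact aeval_quotient_eq_sum_partitions n H hm hr hrm hr0 hζ F hF Xp hX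
end
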